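/- arXiv:0801.2856 — 4 statements merged into one kernel-verified Lean document; each statement's English description precedes it below -/
import Mathlib

section
/- Let Γ be a completed primitive simple graph (hence 4-regular), let ab be an edge of Γ, and suppose that the common neighbours of a and b are exactly the two distinct vertices c and d (so the edge ab lies in exactly the two triangles (a,b,c) and (a,b,d)). Let e be the fourth neighbour of b, so that the neighbours of b are a, c, d, e. Then cd is not an edge of Γ and ae is not an edge of Γ, and the double-triangle-reduced graph Γ′ — the graph on the vertex set V(Γ)∖{b} obtained by deleting the vertex b together with its four incident edges and adding the two new edges cd and ae — is a completed primitive simple graph. -/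
/-!
Cuts are counted as double sums over ordered pairs (`cutNum`), which makes two identities available.
Inserting a vertex `v` in a set `S` changes the cut by `deg v - 2 * deg_S v` (`cutNum_insert`), and
the cut of `A` in the reduced graph is the cut of `A` in `G`, minus the number of neighbours of `b`
in `A`, plus one for each of the new edges `cd`, `ae` split by `A` (`cutNum_dtReduce`).

The edge `ae` is absent because `e` is not a common neighbour of `a` and `b`; the edge `cd` is absent
because otherwise `{a, b, c, d}` would be a copy of `K₄`, with a cut of size 4. The second identity
for singletons gives 4-regularity of the reduced graph. For a cut `A` with two vertices on each side,
let `k` be the number of neighbours of `b` in `A`, `r` the number of edges of `G - b` split by `A`, and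
`s` the number of new edges split by `A`. Since `A` and `A ∪ {b}` are cuts of `G` of size at least 5,
`r + k ≥ 5` and `r + (4 - k) ≥ 5`. This gives `r + s ≥ 5` except when `k = 2` and `s = 0`, that is, when
`a, e` lie on one side and `c, d` on the other; there `seven_le_cutNum` gives `r + 2 ≥ 7` by moving
`a` across the cut. Connectedness follows from the cut bound (`connected_of_cuts`).
-/

open scoped Classical

/-- The set of edges of `G` with one endpoint in `A` and the other outside `A`. -/
noncomputable def cutEdges {V : Type*} [Fintype V] (G : SimpleGraph V) (A : Finset V) :
    Finset (Sym2 V) :=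
  G.edgeFinset.filter (fun e => ∃ x, x ∈ e ∧ x ∈ A ∧ ∃ y, y ∈ e ∧ y ∉ A)

/-- A finite simple graph is *completed primitive* if it is 4-regular, connected, has at
least 3 vertices, and every edge cut separating two parts with at least two vertices each
has size strictly greater than 4. -/
def CompletedPrimitive {V : Type*} [Fintype V] (G : SimpleGraph V) : Prop :=
  (∀ v : V, G.degree v = 4) ∧ G.Connected ∧ 3 ≤ Fintype.card V ∧
    ∀ A : Finset V, 2 ≤ A.card → 2 ≤ Aᶜ.card → 4 < (cutEdges G A).card

/-- The double-triangle-reduced graph: delete the vertex `b` (with its four incident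
edges) and add the two new edges `cd` and `ae`. -/
def dtReduce {V : Type*} (G : SimpleGraph V) (a b c d e : V) :
    SimpleGraph {x : V // x ≠ b} :=
  (SimpleGraph.fromRel
      (fun x y => G.Adj x y ∨ (x = c ∧ y = d) ∨ (x = a ∧ y = e))).induce
    {x : V | x ≠ b}

/-- The number of ordered adjacent pairs `(x, y)` with `x ∈ S` and `y ∉ S`, written as a double
sum of indicators so that cuts in different graphs can be compared termwise. -/
noncomputable def cutNum {V : Type*} [Fintype V] (G : SimpleGraph V) (S : Finset V) : ℕ :=
  ∑ x, ∑ y, if x ∈ S ∧ y ∉ S ∧ G.Adj x y then 1 else 0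

/-- The number of neighbours of `v` in `S`. -/
noncomputable def degIn {V : Type*} [Fintype V] (G : SimpleGraph V) (v : V) (S : Finset V) : ℕ :=
  ∑ x, if x ∈ S ∧ G.Adj v x then 1 else 0

lemma card_cutEdges {V : Type*} [Fintype V] (G : SimpleGraph V) (S : Finset V) :
    (cutEdges G S).card = cutNum G S := by
  unfold cutNum
  rw [← Finset.sum_product', ← Finset.card_filter]
  symm
  apply Finset.card_bij (fun p _ => s(p.1, p.2))
  · rintro ⟨x, y⟩ h
    simp only [Finset.mem_filter, Finset.mem_product, Finset.mem_univ, true_and] at h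
    simp only [cutEdges, Finset.mem_filter, SimpleGraph.mem_edgeFinset, SimpleGraph.mem_edgeSet]
    exact ⟨h.2.2, x, by simp, h.1, y, by simp, h.2.1⟩
  · rintro ⟨x, y⟩ h ⟨x', y'⟩ h' he
    simp only [Finset.mem_filter, Finset.mem_product, Finset.mem_univ, true_and] at h h'
    simp only [Sym2.eq_iff] at he
    rcases he with ⟨rfl, rfl⟩ | ⟨rfl, rfl⟩
    · rfl
    · exact absurd h.1 h'.2.1
  · intro e he
    simp only [cutEdges, Finset.mem_filter, SimpleGraph.mem_edgeFinset] at he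
    obtain ⟨hadj, x, hx, hxS, y, hy, hyS⟩ := he
    have hne : x ≠ y := by rintro rfl; exact hyS hxS
    have : e = s(x, y) := (Sym2.mem_and_mem_iff hne).1 ⟨hx, hy⟩
    subst this
    exact ⟨(x, y), by simpa using ⟨hxS, hyS, hadj⟩, rfl⟩

lemma degIn_eq_card {V : Type*} [Fintype V] (G : SimpleGraph V) (v : V) (S : Finset V) :
    degIn G v S = (S.filter (G.Adj v)).card := by
  rw [degIn, ← Finset.card_filter]
  congr 1
  ext x
  simp

lemma cutNum_compl {V : Type*} [Fintype V] [DecidableEq V] (G : SimpleGraph V) (S : Finset V) :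
    cutNum G Sᶜ = cutNum G S := by
  unfold cutNum
  rw [Finset.sum_comm]
  refine Finset.sum_congr rfl fun x _ => Finset.sum_congr rfl fun y _ => ?_
  have h : (y ∈ Sᶜ ∧ x ∉ Sᶜ ∧ G.Adj y x) ↔ (x ∈ S ∧ y ∉ S ∧ G.Adj x y) := by
    simp only [Finset.mem_compl, not_not, G.adj_comm y x]
    tauto
  by_cases hxy : x ∈ S ∧ y ∉ S ∧ G.Adj x y
  · rw [if_pos hxy, if_pos (h.2 hxy)]
  · rw [if_neg hxy, if_neg fun h' => hxy (h.1 h')]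

lemma degree_eq_sum {V : Type*} [Fintype V] (G : SimpleGraph V) (v : V) :
    G.degree v = ∑ y, if G.Adj v y then 1 else 0 := by
  rw [← Finset.card_filter, ← SimpleGraph.card_neighborFinset_eq_degree]
  congr 1
  ext y
  simp

/-- Adding `v` to `S` turns the edges from `v` to `S` into inner edges, and the other edges at `v`
into cut edges. -/
lemma cutNum_insert {V : Type*} [Fintype V] (G : SimpleGraph V) (S : Finset V) (v : V)
    (hv : v ∉ S) :
    cutNum G (insert v S) + 2 * degIn G v S = cutNum G S + G.degree v := by
  have h1 : degIn G v S = ∑ x, ∑ y, if y = v then (if x ∈ S ∧ G.Adj v x then 1 else 0) else 0 := by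
    simp [degIn]
  have h2 : degIn G v S = ∑ x, ∑ y, if x = v then (if y ∈ S ∧ G.Adj v y then 1 else 0) else 0 := by
    rw [Finset.sum_comm]; simp [degIn]
  have h3 : G.degree v = ∑ x, ∑ y, if x = v then (if G.Adj v y then 1 else 0) else 0 := by
    rw [Finset.sum_comm]; simp [degree_eq_sum]
  have h4 : 2 * degIn G v S = degIn G v S + degIn G v S := two_mul _
  rw [h4, h3]
  nth_rewrite 1 [h1]
  rw [h2]
  unfold cutNum
  simp only [← Finset.sum_add_distrib]
  refine Finset.sum_congr rfl fun x _ => Finset.sum_congr rfl fun y _ => ?_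
  by_cases hx : x = v
  · subst hx
    by_cases hy : y = x
    · subst hy; simp [hv]
    · by_cases hyS : y ∈ S <;> simp [hv, hy, hyS]
  · by_cases hy : y = v
    · subst hy; simp [hv, hx, G.adj_comm]
    · simp [hx, hy]

lemma cutNum_singleton {V : Type*} [Fintype V] (G : SimpleGraph V) (v : V) :
    cutNum G {v} = G.degree v := by
  have := cutNum_insert G ∅ v (by simp)
  simpa [cutNum, degIn] using this

/-- A component of a disconnected 4-regular graph would be an empty cut with at least two vertices
on both sides. -/
lemma connected_of_cuts {V : Type*} [Fintype V] [Nonempty V] (G : SimpleGraph V)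
    (hdeg : ∀ v, G.degree v = 4)
    (hcut : ∀ A : Finset V, 2 ≤ A.card → A.card + 2 ≤ Fintype.card V → 4 < cutNum G A) :
    G.Connected := by
  have key : ∀ u v, G.Reachable u v := by
    intro u v
    by_contra huv
    have hnb : ∀ w, ∃ z, G.Adj w z := by
      intro w
      rw [← G.degree_pos_iff_exists_adj, hdeg]
      norm_num
    obtain ⟨u', hu'⟩ := hnb u
    obtain ⟨v', hv'⟩ := hnb v
    have h := hcut (Finset.univ.filter fun w => G.Reachable u w)
      (Finset.one_lt_card.2 ⟨u, by simp, u', by simpa using hu'.reachable, hu'.ne⟩)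
      (by
        rw [← Finset.card_add_card_compl (Finset.univ.filter fun w => G.Reachable u w)]
        exact Nat.add_le_add_left (Finset.one_lt_card.2 ⟨v, by simpa using huv, v', by
          simpa using fun h : G.Reachable u v' => huv (h.trans hv'.symm.reachable), hv'.ne⟩) _)
    have h0 : cutNum G (Finset.univ.filter fun w => G.Reachable u w) = 0 := by
      unfold cutNum
      refine Finset.sum_eq_zero fun x _ => Finset.sum_eq_zero fun y _ => if_neg ?_
      simp only [Finset.mem_filter, Finset.mem_univ, true_and]
      rintro ⟨hx, hy, hxy⟩
      exact hy (hx.trans hxy.reachable)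
    omega
  exact ⟨key⟩

/-- Completed primitivity with both sides of a cut measured through the first one; connectedness
is automatic. -/
lemma completedPrimitive_of_cuts {V : Type*} [Fintype V] (G : SimpleGraph V)
    (hcard : 3 ≤ Fintype.card V) (hdeg : ∀ v, G.degree v = 4)
    (hcut : ∀ A : Finset V, 2 ≤ A.card → A.card + 2 ≤ Fintype.card V → 4 < cutNum G A) :
    CompletedPrimitive G := by
  have : Nonempty V := Fintype.card_pos_iff.1 (by omega)
  refine ⟨hdeg, connected_of_cuts G hdeg hcut, hcard, fun A h1 h2 => ?_⟩
  rw [card_cutEdges]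
  have h3 := Finset.card_add_card_compl A
  exact hcut A h1 (by omega)

lemma dtReduce_adj {V : Type*} (G : SimpleGraph V) (a b c d e : V) (x y : {x : V // x ≠ b}) :
    (dtReduce G a b c d e).Adj x y ↔ (x : V) ≠ y ∧
      ((G.Adj x y ∨ (x.1 = c ∧ y.1 = d) ∨ (x.1 = a ∧ y.1 = e)) ∨
        (G.Adj y x ∨ (y.1 = c ∧ x.1 = d) ∨ (y.1 = a ∧ x.1 = e))) :=
  Iff.rfl

/-- Comparison of the cut `A` in the reduced graph with the same set as a cut in `G`: the edges
from `b` to `A` disappear, and each of the two new edges counts when it is split by `A`. -/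
lemma cutNum_dtReduce {V : Type*} [Fintype V] (G : SimpleGraph V) (a b c d e : V)
    (hac : a ≠ c) (had : a ≠ d) (hcd : c ≠ d) (hea : e ≠ a) (hec : e ≠ c) (hed : e ≠ d)
    (hnb : ∀ x : V, G.Adj b x ↔ (x = a ∨ x = c ∨ x = d ∨ x = e))
    (hncd : ¬ G.Adj c d) (hnae : ¬ G.Adj a e) (A : Finset {x : V // x ≠ b})
    (S : Finset V) (hS : S = A.map (Function.Embedding.subtype _)) :
    cutNum (dtReduce G a b c d e) A
      + ((if a ∈ S then 1 else 0) + (if c ∈ S then 1 else 0) + (if d ∈ S then 1 else 0)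
        + (if e ∈ S then 1 else 0)) =
    cutNum G S + (if (c ∈ S ↔ d ∈ S) then 0 else 1) + (if (a ∈ S ↔ e ∈ S) then 0 else 1) := by
  have hbS : b ∉ S := by simp [hS]
  have hba : a ≠ b := fun h => G.loopless.irrefl b ((hnb b).2 (by simp [h]))
  have hbc : c ≠ b := fun h => G.loopless.irrefl b ((hnb b).2 (by simp [h]))
  have hbd : d ≠ b := fun h => G.loopless.irrefl b ((hnb b).2 (by simp [h]))
  have hbe : e ≠ b := fun h => G.loopless.irrefl b ((hnb b).2 (by simp [h]))
  have hmem : ∀ x : {x : V // x ≠ b}, x ∈ A ↔ (x : V) ∈ S := by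
    intro x; simp [hS, x.2]
  have hsub : ∀ f : V → ℕ, f b = 0 → ∑ x : {x : V // x ≠ b}, f x = ∑ x, f x := by
    intro f hf
    rw [← Finset.sum_subtype (Finset.univ.erase b) (by simp) f]
    exact Finset.sum_erase _ hf
  -- the edge count in the reduced graph, as a sum over the vertices of `G`
  let g : V → V → ℕ := fun x y => if x ∈ S ∧ y ∉ S ∧ y ≠ b ∧ (G.Adj x y ∨ (x = c ∧ y = d) ∨
      (x = d ∧ y = c) ∨ (x = a ∧ y = e) ∨ (x = e ∧ y = a)) then 1 else 0
  have h1 : cutNum (dtReduce G a b c d e) A = ∑ x, ∑ y, g x y := by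
    rw [← hsub _ (by simp [g, hbS])]
    unfold cutNum
    refine Finset.sum_congr rfl fun x _ => ?_
    rw [← hsub _ (by simp [g])]
    refine Finset.sum_congr rfl fun y _ => ?_
    have hiff : (x ∈ A ∧ y ∉ A ∧ (dtReduce G a b c d e).Adj x y) ↔
        (x.1 ∈ S ∧ y.1 ∉ S ∧ y.1 ≠ b ∧ (G.Adj x y ∨ (x.1 = c ∧ y.1 = d) ∨
          (x.1 = d ∧ y.1 = c) ∨ (x.1 = a ∧ y.1 = e) ∨ (x.1 = e ∧ y.1 = a))) := by
      rw [dtReduce_adj, hmem, hmem, G.adj_comm y x]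
      constructor
      · rintro ⟨h, h', -, h''⟩
        exact ⟨h, h', y.2, by tauto⟩
      · rintro ⟨h, h', -, h''⟩
        exact ⟨h, h', fun hxy => h' (hxy ▸ h), by tauto⟩
    simp only [g, hiff]
  have h2 : (if a ∈ S then 1 else 0) + (if c ∈ S then 1 else 0) + (if d ∈ S then 1 else 0)
        + (if e ∈ S then 1 else 0) = ∑ x, ∑ y, if y = b then (if x ∈ S ∧ G.Adj b x then 1 else 0)
          else 0 := by
    have : ∀ x, (if x ∈ S ∧ G.Adj b x then 1 else 0) =
        (if x = a then (if a ∈ S then 1 else 0) else 0) +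
        (if x = c then (if c ∈ S then 1 else 0) else 0) +
        (if x = d then (if d ∈ S then 1 else 0) else 0) +
        (if x = e then (if e ∈ S then 1 else 0) else 0) := by
      intro x
      rw [hnb]
      by_cases xa : x = a
      · subst xa; simp [hac, had, hea.symm]
      by_cases xc : x = c
      · subst xc; simp [hac.symm, hcd, hec.symm]
      by_cases xd : x = d
      · subst xd; simp [had.symm, hcd.symm, hed.symm]
      by_cases xe : x = e
      · subst xe; simp [hea, hec, hed]
      simp [xa, xc, xd, xe]
    simp only [Finset.sum_ite_eq', Finset.mem_univ, if_true, this, Finset.sum_add_distrib]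
  have hpair : ∀ p q : V, (if (p ∈ S ↔ q ∈ S) then 0 else 1) = ∑ x, ∑ y,
      ((if x = p then (if y = q then (if p ∈ S ∧ q ∉ S then 1 else 0) else 0) else 0) +
       (if x = q then (if y = p then (if q ∈ S ∧ p ∉ S then 1 else 0) else 0) else 0)) := by
    intro p q
    simp only [Finset.sum_add_distrib]
    rw [Finset.sum_comm]
    nth_rewrite 2 [Finset.sum_comm]
    simp only [Finset.sum_ite_eq', Finset.mem_univ, if_true]
    by_cases hp : p ∈ S <;> by_cases hq : q ∈ S <;> simp [hp, hq]
  rw [h1, h2, hpair c d, hpair a e]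
  unfold cutNum
  simp only [← Finset.sum_add_distrib]
  refine Finset.sum_congr rfl fun x _ => Finset.sum_congr rfl fun y _ => ?_
  have hndc : ¬ G.Adj d c := fun h => hncd h.symm
  have hnea : ¬ G.Adj e a := fun h => hnae h.symm
  by_cases hyb : y = b
  · subst hyb
    simp [g, hbS, G.adj_comm, hba.symm, hbc.symm, hbd.symm, hbe.symm]
  · simp only [g, hyb, if_false, ne_eq, not_false_eq_true, true_and, add_zero]
    by_cases hxy : G.Adj x y
    · have h1 : ¬ (x = c ∧ y = d) := by rintro ⟨rfl, rfl⟩; exact hncd hxy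
      have h2 : ¬ (x = d ∧ y = c) := by rintro ⟨rfl, rfl⟩; exact hndc hxy
      have h3 : ¬ (x = a ∧ y = e) := by rintro ⟨rfl, rfl⟩; exact hnae hxy
      have h4 : ¬ (x = e ∧ y = a) := by rintro ⟨rfl, rfl⟩; exact hnea hxy
      simp only [← ite_and, hxy, true_or, and_true]
      simp [← and_assoc, h1, h2, h3, h4]
    · simp only [hxy, and_false, if_false, false_or, zero_add]
      clear h1 h2 hpair hmem hsub hS hnb
      clear_value g
      grind

/-- If neither new edge is split by `S` and `b` has two neighbours on each side, the cut `S` of `G`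
has size at least 7: removing `a`, at most one of whose neighbours lies in `S`, decreases the cut
by at least 2 and leaves a cut of size at least 5, or else `S = {a, e}`, whose cut has size 8. -/
lemma seven_le_cutNum {V : Type*} [Fintype V] (G : SimpleGraph V) (hdeg : ∀ v, G.degree v = 4)
    (hcut : ∀ A : Finset V, 2 ≤ A.card → 2 ≤ Aᶜ.card → 4 < cutNum G A) (a b c d e : V)
    (hab : G.Adj a b) (hadj_ac : G.Adj a c) (hadj_ad : G.Adj a d) (hbc : b ≠ c) (hbd : b ≠ d)
    (hcd : c ≠ d) (hea : e ≠ a) (hnae : ¬ G.Adj a e) (S : Finset V) (haS : a ∈ S) (hbS : b ∉ S)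
    (hcardS : S.card + 2 ≤ Fintype.card V) :
    c ∉ S → d ∉ S → e ∈ S → 7 ≤ cutNum G S := by
  intro hc hd he
  have hrem := cutNum_insert G (S.erase a) a (by simp)
  rw [Finset.insert_erase haS, hdeg] at hrem
  have hcard' := Finset.card_erase_add_one haS
  by_cases hbig : 2 ≤ (S.erase a).card
  · have h5 := hcut (S.erase a) hbig (by rw [Finset.card_compl]; omega)
    -- three of the four neighbours of `a`, namely `b`, `c`, `d`, lie outside `S`
    have hle : degIn G a (S.erase a) ≤ 1 := by
      have hdisj : Disjoint ((S.erase a).filter (G.Adj a)) {b, c, d} := by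
        rw [Finset.disjoint_right]
        intro x hx
        simp only [Finset.mem_insert, Finset.mem_singleton] at hx
        rcases hx with rfl | rfl | rfl <;> simp [hbS, hc, hd]
      have hsub : (S.erase a).filter (G.Adj a) ∪ {b, c, d} ⊆ G.neighborFinset a := by
        intro x hx
        rw [SimpleGraph.mem_neighborFinset]
        simp only [Finset.mem_union, Finset.mem_filter, Finset.mem_insert,
          Finset.mem_singleton] at hx
        rcases hx with hx | rfl | rfl | rfl
        exacts [hx.2, hab, hadj_ac, hadj_ad]
      have h6 := Finset.card_le_card hsub
      rw [Finset.card_union_of_disjoint hdisj, SimpleGraph.card_neighborFinset_eq_degree,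
        hdeg] at h6
      have h7 : ({b, c, d} : Finset V).card = 3 := by simp [hbc, hbd, hcd]
      rw [degIn_eq_card]
      omega
    omega
  · -- here `S = {a, e}`, and `a`, `e` are not adjacent
    have hSe : S.erase a = {e} := by
      have he' : e ∈ S.erase a := Finset.mem_erase.2 ⟨hea, he⟩
      have hpos := Finset.card_pos.2 ⟨e, he'⟩
      obtain ⟨z, hz⟩ := Finset.card_eq_one.1 (show (S.erase a).card = 1 by omega)
      rw [hz, Finset.mem_singleton] at he'
      rw [hz, he']
    rw [hSe, cutNum_singleton, hdeg, degIn_eq_card] at hrem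
    simp [Finset.filter_singleton, hnae] at hrem
    omega

/-- **Double triangle reduction preserves completed primitivity.** If in a completed
primitive graph the edge `ab` lies in exactly the two triangles `(a,b,c)` and `(a,b,d)`,
and `e` is the fourth neighbour of `b`, then `cd` and `ae` are non-edges and the
double-triangle-reduced graph is completed primitive. -/
theorem dtReduce_completedPrimitive {V : Type*} [Fintype V] (G : SimpleGraph V)
    (hG : CompletedPrimitive G) (a b c d e : V)
    (hab : G.Adj a b) (hcd : c ≠ d)
    (hcommon : ∀ x : V, (G.Adj a x ∧ G.Adj b x) ↔ (x = c ∨ x = d))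
    (hnb : ∀ x : V, G.Adj b x ↔ (x = a ∨ x = c ∨ x = d ∨ x = e))
    (hea : e ≠ a) (hec : e ≠ c) (hed : e ≠ d) :
    ¬ G.Adj c d ∧ ¬ G.Adj a e ∧ CompletedPrimitive (dtReduce G a b c d e) := by
  obtain ⟨hdeg, -, -, hcut⟩ := hG
  simp only [card_cutEdges] at hcut
  obtain ⟨hadj_ac, hadj_bc⟩ := (hcommon c).2 (Or.inl rfl)
  obtain ⟨hadj_ad, hadj_bd⟩ := (hcommon d).2 (Or.inr rfl)
  have hadj_be : G.Adj b e := (hnb e).2 (by simp)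
  have hac := hadj_ac.ne
  have had := hadj_ad.ne
  have hbc := hadj_bc.ne
  have hbd := hadj_bd.ne
  have hbe := hadj_be.ne
  have hab' := hab.ne
  have hnae : ¬ G.Adj a e := by
    intro h
    rcases (hcommon e).1 ⟨h, hadj_be⟩ with h | h
    · exact hec h
    · exact hed h
  -- `a` has four neighbours, none of which is `a` or `e`
  have hcardV : 6 ≤ Fintype.card V := by
    have h1 : G.neighborFinset a ⊆ ({a, e} : Finset V)ᶜ := by
      intro x hx
      rw [SimpleGraph.mem_neighborFinset] at hx
      simp only [Finset.mem_compl, Finset.mem_insert, Finset.mem_singleton, not_or]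
      exact ⟨hx.ne', fun h => hnae (h ▸ hx)⟩
    have h2 := Finset.card_le_card h1
    rw [SimpleGraph.card_neighborFinset_eq_degree, hdeg, Finset.card_compl,
      Finset.card_pair hea.symm] at h2
    omega
  have hncd : ¬ G.Adj c d := by
    -- otherwise `{a, b, c, d}` induces `K₄` and is a cut of size 4
    intro h
    have e1 := cutNum_insert G {a} b (by simp [hab'.symm])
    have e2 := cutNum_insert G {b, a} c (by simp [hac.symm, hbc.symm])
    have e3 := cutNum_insert G {c, b, a} d (by simp [hcd.symm, had.symm, hbd.symm])
    rw [cutNum_singleton] at e1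
    simp only [hdeg] at e1 e2 e3
    have d1 : degIn G b {a} = 1 := by
      simp [degIn_eq_card, Finset.filter_singleton, hab.symm]
    have d2 : degIn G c {b, a} = 2 := by
      simp [degIn_eq_card, Finset.filter_insert, Finset.filter_singleton, hadj_ac.symm,
        hadj_bc.symm, hab'.symm]
    have d3 : degIn G d {c, b, a} = 3 := by
      simp [degIn_eq_card, Finset.filter_insert, Finset.filter_singleton, hadj_ad.symm,
        hadj_bd.symm, h.symm, hab'.symm, hac.symm, hbc.symm]
    have hc4 : ({d, c, b, a} : Finset V).card = 4 := by
      simp [hab'.symm, hac.symm, hbc.symm, hcd.symm, had.symm, hbd.symm]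
    have := hcut {d, c, b, a} (by omega) (by rw [Finset.card_compl]; omega)
    omega
  have hcmp := cutNum_dtReduce G a b c d e hac had hcd hea hec hed hnb hncd hnae
  have hdeg' : ∀ v, (dtReduce G a b c d e).degree v = 4 := by
    intro v
    have h := hcmp {v} {v.1} (by simp)
    rw [cutNum_singleton, cutNum_singleton, hdeg] at h
    by_cases va : v.1 = a
    · simp_all [Finset.mem_singleton, eq_comm]
    by_cases vc : v.1 = c
    · simp_all [Finset.mem_singleton, eq_comm]
    by_cases vd : v.1 = d
    · simp_all [Finset.mem_singleton, eq_comm]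
    by_cases ve : v.1 = e
    · simp_all [Finset.mem_singleton, eq_comm]
    simpa [Ne.symm va, Ne.symm vc, Ne.symm vd, Ne.symm ve] using h
  -- By complementation it is enough to treat cuts whose first side contains `a`.
  have hcutA : ∀ A : Finset {x : V // x ≠ b}, (⟨a, hab'⟩ : {x : V // x ≠ b}) ∈ A → 2 ≤ A.card →
      A.card + 2 ≤ Fintype.card {x : V // x ≠ b} → 4 < cutNum (dtReduce G a b c d e) A := by
    intro A haA hA2 hAc2
    obtain ⟨S, hS⟩ : ∃ S, S = A.map (Function.Embedding.subtype _) := ⟨_, rfl⟩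
    have h := hcmp A S hS
    have hbS : b ∉ S := by simp [hS]
    have haS : a ∈ S := by simp [hS, hab', haA]
    have hcS : S.card = A.card := by rw [hS, Finset.card_map]
    have hcard : Fintype.card {x : V // x ≠ b} + 1 = Fintype.card V := by
      have h1 := Fintype.card_subtype_compl (fun x => x = b)
      rw [Fintype.card_subtype_eq] at h1
      have h2 : Fintype.card {x : V // x ≠ b} = Fintype.card V - 1 := by convert h1
      omega
    have hS1 := hcut S (by omega) (by rw [Finset.card_compl]; omega)
    have hS2 := hcut (insert b S) (by rw [Finset.card_insert_of_notMem hbS]; omega)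
      (by rw [Finset.card_compl, Finset.card_insert_of_notMem hbS]; omega)
    have hins := cutNum_insert G S b hbS
    rw [hdeg] at hins
    have hk : degIn G b S = (if a ∈ S then 1 else 0) + (if c ∈ S then 1 else 0)
        + (if d ∈ S then 1 else 0) + (if e ∈ S then 1 else 0) := by
      have : S.filter (G.Adj b) = ({a, c, d, e} : Finset V).filter (· ∈ S) := by
        ext x
        simp [hnb, and_comm]
      rw [degIn_eq_card, this]
      rw [Finset.card_filter, Finset.sum_insert (by simp [hac, had, hea.symm]),
        Finset.sum_insert (by simp [hcd, hec.symm]), Finset.sum_insert (by simp [hed.symm]),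
        Finset.sum_singleton]
      ring
    have hspecial : c ∉ S → d ∉ S → e ∈ S → 7 ≤ cutNum G S :=
      seven_le_cutNum G hdeg hcut a b c d e hab hadj_ac hadj_ad hbc hbd hcd hea hnae S haS hbS
        (by omega)
    by_cases hc : c ∈ S <;> by_cases hd : d ∈ S <;> by_cases he : e ∈ S <;>
      simp [haS, hc, hd, he] at h hk hspecial <;> omega
  have hcut' : ∀ A : Finset {x : V // x ≠ b}, 2 ≤ A.card →
      A.card + 2 ≤ Fintype.card {x : V // x ≠ b} →
      4 < cutNum (dtReduce G a b c d e) A := by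
    intro A h1 h2
    by_cases haA : (⟨a, hab'⟩ : {x : V // x ≠ b}) ∈ A
    · exact hcutA A haA h1 h2
    · rw [← cutNum_compl]
      have h3 := Finset.card_add_card_compl A
      exact hcutA Aᶜ (Finset.mem_compl.2 haA) (by omega) (by omega)
  refine ⟨hncd, hnae, completedPrimitive_of_cuts _ ?_ hdeg' hcut'⟩
  have := (dtReduce G a b c d e).degree_lt_card_verts ⟨a, hab'⟩
  rw [hdeg'] at this
  omega
end

section
/- Let N ≥ 1 and let m, n be integers such that, in ZMod N, the four residues m, −m, n, −n are pairwise distinct and nonzero (equivalently: C^N_{m,n} is simple and 4-regular, i.e. 2m ≢ 0, 2n ≢ 0 and m ≢ ±n mod N), and such that gcd(m, n, N) = 1 (so C^N_{m,n} is connected). Then the cyclic graph C^N_{m,n} is completed primitive, with loop order ℓ = N − 2. -/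
/-!
For `A ⊆ ℤ/N` and a step `s`, let `p s` be the number of `a ∈ A` with `a + s ∉ A`. Since `A` and
`A - s` have the same size, `p (-s) = p s`, so the cut of `A` has at least
`p m + p (-m) + p n + p (-n) = 2 (p m + p n)` edges, and it suffices to show `p m + p n ≥ 3`
when `A` and its complement both have at least two elements.

* If `p m = 0`, then `A` is a union of cosets of `⟨m⟩`. As `m` and `n` generate `ℤ/N`, some `a ∈ A`
  has `a + n ∉ A`; the same then holds for `a + m` and `a + 2m`, so `p n ≥ 3`, because `m` has
  order at least three (`three_le_of_step_closed`). The case `p n = 0` is symmetric.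
* If `p m = p n = 1`, let `f` be the indicator function of `A`. Then
  `f z - f (z - m) = [z = x] - [z = y]` and `f z - f (z - n) = [z = u] - [z = v]`. Taking the
  `n`-difference of the first and the `m`-difference of the second gives an identity between signed
  sums of point masses. It forces either `x = u`, `y = x + m`, `v = x + n`, in which case
  `f - [· = x]` is invariant under both steps, hence constant, and `A = {x}`; or `y = v`,
  `x = y + m`, `u = y + n`, in which case `f + [· = y]` is constant and `A` is the complement of
  `{y}` (`not_both_one`).
-/

open scoped Classical

/-- The cyclic (circulant) graph `C^N_{m,n}`: vertices `ZMod N`, two distinct vertices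
`i`, `j` adjacent iff `i − j ≡ ±m` or `i − j ≡ ±n (mod N)`. -/
def cyclicGraph (N : ℕ) (m n : ZMod N) : SimpleGraph (ZMod N) :=
  SimpleGraph.fromRel (fun i j => i - j = m ∨ i - j = -m ∨ i - j = n ∨ i - j = -n)

section Circulant

variable {N : ℕ}

/-- The elements `a ∈ A` from which the step `s` leaves `A`. -/
noncomputable def exits (A : Finset (ZMod N)) (s : ZMod N) : Finset (ZMod N) :=
  A.filter (fun a => a + s ∉ A)

lemma mem_exits {A : Finset (ZMod N)} {s a : ZMod N} : a ∈ exits A s ↔ a ∈ A ∧ a + s ∉ A := by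
  simp [exits]

/-- Both sides count `|A| - |A ∩ (A - s)|`. -/
lemma card_exits_neg (A : Finset (ZMod N)) (s : ZMod N) :
    (exits A (-s)).card = (exits A s).card := by
  have h1 := Finset.card_filter_add_card_filter_not (s := A) (fun a => a + s ∈ A)
  have h2 := Finset.card_filter_add_card_filter_not (s := A) (fun a => a + -s ∈ A)
  have h3 : (A.filter (fun a => a + s ∈ A)).card = (A.filter (fun a => a + -s ∈ A)).card := by
    apply Finset.card_bij (fun a _ => a + s)
    · intro a ha
      simp only [Finset.mem_filter] at ha ⊢
      exact ⟨ha.2, by simpa using ha.1⟩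
    · intro a _ b _ h
      exact add_right_cancel h
    · intro b hb
      simp only [Finset.mem_filter] at hb
      exact ⟨b + -s, by simpa using hb.symm, by simp⟩
  unfold exits
  omega

/-- A property preserved by the steps `m` and `n` holds everywhere once it holds somewhere,
provided `m` and `n` generate `ℤ/N`. No backward steps are needed, since `ℤ/N` is finite. -/
lemma gen_induction [NeZero N] {m n : ZMod N} (hg : ∃ a b : ZMod N, a * m + b * n = 1)
    (P : ZMod N → Prop) (hm : ∀ z, P z → P (z + m)) (hn : ∀ z, P z → P (z + n))
    {w : ZMod N} (hw : P w) (z : ZMod N) : P z := by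
  obtain ⟨a, b, hab⟩ := hg
  have h1 : ∀ i : ℕ, P (w + i * m) := by
    intro i
    induction i with
    | zero => simpa using hw
    | succ k ih => convert hm _ ih using 1; push_cast; ring
  have h2 : ∀ i j : ℕ, P (w + i * m + j * n) := by
    intro i j
    induction j with
    | zero => simpa using h1 i
    | succ k ih => convert hn _ ih using 1; push_cast; ring
  convert h2 ((z - w) * a).val ((z - w) * b).val using 1
  simp only [ZMod.natCast_val, ZMod.cast_id', id]
  linear_combination (w - z) * hab

lemma three_le_of_step_closed [NeZero N] {m n : ZMod N} (hg : ∃ a b : ZMod N, a * m + b * n = 1)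
    (hm0 : m ≠ 0) (h2m : m ≠ -m) {A : Finset (ZMod N)} (hA : A.Nonempty) (hAc : Aᶜ.Nonempty)
    (h0 : (exits A m).card = 0) : 3 ≤ (exits A n).card := by
  have h0' := card_exits_neg A m
  rw [h0] at h0'
  rw [Finset.card_eq_zero] at h0 h0'
  have hp : ∀ a ∈ A, a + m ∈ A := by
    intro a ha
    by_contra h
    simpa [h0] using mem_exits.2 ⟨ha, h⟩
  have hq : ∀ a, a + m ∈ A → a ∈ A := by
    intro a ha
    by_contra h
    have : a + m ∈ exits A (-m) := mem_exits.2 ⟨ha, by simpa using h⟩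
    simp [h0'] at this
  have hstep : ∀ a ∈ exits A n, a + m ∈ exits A n := by
    intro a ha
    rw [mem_exits] at ha ⊢
    refine ⟨hp _ ha.1, fun h => ha.2 (hq _ ?_)⟩
    rwa [add_right_comm] at h
  obtain ⟨a, ha⟩ : (exits A n).Nonempty := by
    by_contra h
    rw [Finset.not_nonempty_iff_eq_empty] at h
    obtain ⟨w, hw⟩ := hA
    obtain ⟨z, hz⟩ := hAc
    refine Finset.mem_compl.1 hz (gen_induction hg (· ∈ A) hp (fun a ha => ?_) hw z)
    by_contra h'
    simpa [h] using mem_exits.2 ⟨ha, h'⟩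
  have hmm : m + m ≠ 0 := fun h => h2m (eq_neg_of_add_eq_zero_left h)
  have hsub : ({a, a + m, a + m + m} : Finset (ZMod N)) ⊆ exits A n := by
    intro x hx
    simp only [Finset.mem_insert, Finset.mem_singleton] at hx
    rcases hx with rfl | rfl | rfl
    exacts [ha, hstep _ ha, hstep _ (hstep _ ha)]
  have hcard : ({a, a + m, a + m + m} : Finset (ZMod N)).card = 3 := by
    rw [Finset.card_eq_three]
    exact ⟨a, a + m, a + m + m, by simpa using hm0, by simpa [add_assoc] using hmm,
      by simpa using hm0, rfl⟩
  exact hcard ▸ Finset.card_le_card hsub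

/-- If the step `m` leaves `A` exactly once, it also enters `A` exactly once, and the difference of
the indicator function of `A` is a point mass at the entry `x` minus one just after the exit. -/
lemma exists_diff {m : ZMod N} {A : Finset (ZMod N)} (h1 : (exits A m).card = 1) :
    ∃ x y : ZMod N, x ∈ A ∧ y ∉ A ∧ ∀ z, (if z ∈ A then 1 else 0 : ℤ) - (if z - m ∈ A then 1 else 0)
      = (if z = x then 1 else 0) - (if z = y then 1 else 0) := by
  have h2 := card_exits_neg A m
  rw [h1] at h2
  rw [Finset.card_eq_one] at h1 h2
  obtain ⟨y, hy⟩ := h1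
  obtain ⟨x, hx⟩ := h2
  have hx' : ∀ z, (z ∈ A ∧ z - m ∉ A) ↔ z = x := by
    intro z
    rw [← Finset.mem_singleton, ← hx, mem_exits, sub_eq_add_neg]
  have hy' : ∀ z, (z - m ∈ A ∧ z ∉ A) ↔ z = y + m := by
    intro z
    rw [← sub_eq_iff_eq_add, ← Finset.mem_singleton, ← hy, mem_exits, sub_add_cancel]
  refine ⟨x, y + m, ((hx' x).2 rfl).1, ((hy' _).2 rfl).2, fun z => ?_⟩
  rw [if_congr (hx' z).symm rfl rfl, if_congr (hy' z).symm rfl rfl]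
  by_cases ha : z ∈ A <;> by_cases hb : z - m ∈ A <;> simp [ha, hb]

/-- The hypothesis says that `[· ∈ A] - [· = x]` is invariant under the step `m`. -/
lemma step_of_isolated {m x : ZMod N} {A : Finset (ZMod N)}
    (hf : ∀ z, (if z ∈ A then 1 else 0 : ℤ) - (if z - m ∈ A then 1 else 0)
      = (if z = x then 1 else 0) - (if z = x + m then 1 else 0))
    (a : ZMod N) (ha : a ∈ A ∧ a ≠ x) : a + m ∈ A ∧ a + m ≠ x := by
  have e := hf (a + m)
  rw [add_sub_cancel_right, if_pos ha.1, if_neg (fun h => ha.2 (add_right_cancel h))] at e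
  split_ifs at e with h1 h2 <;> first | omega | exact ⟨h1, h2⟩

/-- The hypothesis says that `[· ∈ A] + [· = y]` is invariant under the step `m`. -/
lemma step_of_coisolated {m y : ZMod N} {A : Finset (ZMod N)}
    (hf : ∀ z, (if z ∈ A then 1 else 0 : ℤ) - (if z - m ∈ A then 1 else 0)
      = (if z = y + m then 1 else 0) - (if z = y then 1 else 0))
    (a : ZMod N) (ha : a ∉ A ∧ a ≠ y) : a + m ∉ A ∧ a + m ≠ y := by
  have e := hf (a + m)
  rw [add_sub_cancel_right, if_neg ha.1, if_neg (fun h => ha.2 (add_right_cancel h))] at e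
  split_ifs at e with h1 h2 h2 <;> first | omega | exact ⟨h1, h2⟩

/-- The rigidity step: `A` cannot have a single exit for each of the steps `m` and `n`, unless `A`
or its complement is a single point. -/
lemma not_both_one [NeZero N] {m n : ZMod N} (hg : ∃ a b : ZMod N, a * m + b * n = 1)
    (hm0 : m ≠ 0) (hn0 : n ≠ 0) (hmn : m ≠ n) (hmn' : m ≠ -n)
    {A : Finset (ZMod N)} (hA : 2 ≤ A.card) (hAc : 2 ≤ Aᶜ.card)
    (h1 : (exits A m).card = 1) (h2 : (exits A n).card = 1) : False := by
  obtain ⟨x, y, hx, hy, hf⟩ := exists_diff h1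
  obtain ⟨u, v, hu, hv, hg'⟩ := exists_diff h2
  have hxy : x ≠ y := fun h => hy (h ▸ hx)
  have huv : u ≠ v := fun h => hv (h ▸ hu)
  have hmn2 : m + n ≠ 0 := fun h => hmn' (eq_neg_of_add_eq_zero_left h)
  -- The two mixed second differences of the indicator function agree.
  have key : ∀ z, ((if z = x then 1 else 0 : ℤ) + (if z = y + n then 1 else 0)
      + (if z = u + m then 1 else 0) + (if z = v then 1 else 0))
      = (if z = u then 1 else 0) + (if z = v + m then 1 else 0)
      + (if z = x + n then 1 else 0) + (if z = y then 1 else 0) := by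
    intro z
    have e1 := hf z
    have e2 := hf (z - n)
    have e3 := hg' z
    have e4 := hg' (z - m)
    rw [sub_right_comm] at e2
    simp only [sub_eq_iff_eq_add] at e2 e4
    linarith
  have hcase : (x = u ∧ y = x + m ∧ v = x + n) ∨ (y = v ∧ x = y + m ∧ u = y + n) := by
    -- A point carrying mass on the left-hand side of `key` also carries mass on the right.
    have supp : ∀ z, (z = x ∨ z = y + n ∨ z = u + m ∨ z = v) →
        (z = u ∨ z = v + m ∨ z = x + n ∨ z = y) := by
      intro z h
      by_contra hcon
      push Not at hcon
      have e := key z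
      rw [if_neg hcon.1, if_neg hcon.2.1, if_neg hcon.2.2.1, if_neg hcon.2.2.2] at e
      split_ifs at e <;> first | omega | tauto
    by_cases hxu : x = u
    · left
      subst hxu
      have hyx : y = x + m := by
        rcases supp (x + m) (by simp) with h | h | h | h
        · exact absurd h (by simpa using hm0)
        · exact absurd (add_right_cancel h) huv
        · exact absurd (add_left_cancel h) hmn
        · exact h.symm
      refine ⟨rfl, hyx, ?_⟩
      rcases supp v (by simp) with h | h | h | h
      · exact absurd h.symm huv
      · exact absurd h (by simpa using hm0)
      · exact h
      · -- Here `v = y = x + m` would have mass at least two on the left, but only one on the right.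
        exfalso
        have e := key v
        subst h
        subst hyx
        simp only [add_left_inj, add_right_inj, left_eq_add, hm0, hmn,
          huv.symm, if_true, if_false] at e
        split_ifs at e <;> omega
    · right
      have hxv : x = v + m := by
        rcases supp x (by simp) with h | h | h | h
        · exact absurd h hxu
        · exact h
        · exact absurd h (by simpa using hn0)
        · exact absurd h hxy
      have hyu : u = y + n := by
        rcases supp (y + n) (by simp) with h | h | h | h
        · exact h.symm
        · -- Here `x = y + n` would have mass at least two on the left, but only one on the right.
          exfalso
          have e := key x
          have h' : x = y + n := hxv.trans h.symm
          rw [if_pos rfl, if_pos h', if_neg hxu, if_pos hxv, if_neg hxy,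
            if_neg (by simpa using hn0 : x ≠ x + n)] at e
          split_ifs at e <;> omega
        · exact absurd (add_right_cancel h).symm hxy
        · exact absurd h (by simpa using hn0)
      have hyv : y = v := by
        rcases supp (u + m) (by simp) with h | h | h | h
        · exact absurd h (by simpa using hm0)
        · exact absurd (add_right_cancel h) huv
        · linear_combination h - hyu + hxv
        · exact absurd (by linear_combination h - hyu : m + n = 0) hmn2
      exact ⟨hyv, by rw [hyv, hxv], hyu⟩
  rcases hcase with ⟨rfl, rfl, rfl⟩ | ⟨rfl, rfl, rfl⟩
  · obtain ⟨w, hw, hwx⟩ := Finset.exists_mem_ne (by omega : 1 < A.card) x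
    obtain ⟨z, hz⟩ : Aᶜ.Nonempty := Finset.card_pos.1 (by omega)
    exact Finset.mem_compl.1 hz (gen_induction hg (fun z => z ∈ A ∧ z ≠ x)
      (step_of_isolated hf) (step_of_isolated hg') ⟨hw, hwx⟩ z).1
  · obtain ⟨w, hw, hwy⟩ := Finset.exists_mem_ne (by omega : 1 < Aᶜ.card) y
    obtain ⟨z, hz⟩ : A.Nonempty := Finset.card_pos.1 (by omega)
    exact (gen_induction hg (fun z => z ∉ A ∧ z ≠ y)
      (step_of_coisolated hf) (step_of_coisolated hg') ⟨Finset.mem_compl.1 hw, hwy⟩ z).1 hz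

lemma three_le_exits [NeZero N] {m n : ZMod N} (hg : ∃ a b : ZMod N, a * m + b * n = 1)
    (hm0 : m ≠ 0) (hn0 : n ≠ 0) (h2m : m ≠ -m) (h2n : n ≠ -n) (hmn : m ≠ n) (hmn' : m ≠ -n)
    {A : Finset (ZMod N)} (hA : 2 ≤ A.card) (hAc : 2 ≤ Aᶜ.card) :
    3 ≤ (exits A m).card + (exits A n).card := by
  have hA' : A.Nonempty := Finset.card_pos.1 (by omega)
  have hAc' : Aᶜ.Nonempty := Finset.card_pos.1 (by omega)
  have hg' : ∃ a b : ZMod N, a * n + b * m = 1 := by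
    obtain ⟨a, b, h⟩ := hg
    exact ⟨b, a, by rw [add_comm, h]⟩
  have c1 := three_le_of_step_closed hg hm0 h2m hA' hAc'
  have c2 := three_le_of_step_closed hg' hn0 h2n hA' hAc'
  have c3 := not_both_one hg hm0 hn0 hmn hmn' hA hAc
  by_contra h
  by_cases p0 : (exits A m).card = 0
  · have := c1 p0; omega
  by_cases q0 : (exits A n).card = 0
  · have := c2 q0; omega
  exact c3 (by omega) (by omega)

lemma cyclicGraph_adj {m n : ZMod N} (hm0 : m ≠ 0) (hn0 : n ≠ 0) (v w : ZMod N) :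
    (cyclicGraph N m n).Adj v w ↔ w = v + m ∨ w = v + -m ∨ w = v + n ∨ w = v + -n := by
  unfold cyclicGraph
  rw [SimpleGraph.fromRel_adj]
  grind

lemma card_steps {m n : ZMod N} (h2m : m ≠ -m) (h2n : n ≠ -n) (hmn : m ≠ n) (hmn' : m ≠ -n) :
    ({m, -m, n, -n} : Finset (ZMod N)).card = 4 := by
  rw [Finset.card_insert_of_notMem, Finset.card_insert_of_notMem, Finset.card_pair h2n]
  all_goals grind

/-- Each pair `(s, a)` with `a ∈ A`, `a + s ∉ A` gives a cut edge `{a, a + s}`, from which the pair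
can be recovered. -/
lemma sum_exits_le_cut [NeZero N] {m n : ZMod N} (hm0 : m ≠ 0) (hn0 : n ≠ 0)
    (h2m : m ≠ -m) (h2n : n ≠ -n) (hmn : m ≠ n) (hmn' : m ≠ -n) (A : Finset (ZMod N)) :
    2 * ((exits A m).card + (exits A n).card) ≤ (cutEdges (cyclicGraph N m n) A).card := by
  have hsum : (({m, -m, n, -n} : Finset (ZMod N)).sigma (fun s => exits A s)).card
      = 2 * ((exits A m).card + (exits A n).card) := by
    rw [Finset.card_sigma, Finset.sum_insert, Finset.sum_insert, Finset.sum_pair h2n,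
      card_exits_neg, card_exits_neg]
    · ring
    all_goals grind
  rw [← hsum]
  apply Finset.card_le_card_of_injOn (fun p => s(p.2, p.2 + p.1))
  · rintro ⟨s, a⟩ h
    simp only [Finset.mem_coe, Finset.mem_sigma, mem_exits, Finset.mem_insert,
      Finset.mem_singleton] at h
    simp only [cutEdges, Finset.mem_coe, Finset.mem_filter, SimpleGraph.mem_edgeFinset,
      SimpleGraph.mem_edgeSet, cyclicGraph_adj hm0 hn0]
    refine ⟨by simpa using h.1, a, by simp, h.2.1, a + s, by simp, h.2.2⟩
  · rintro ⟨s, a⟩ h ⟨t, b⟩ h' heq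
    simp only [Finset.mem_coe, Finset.mem_sigma, mem_exits] at h h'
    simp only [Sym2.eq_iff] at heq
    rcases heq with ⟨rfl, e⟩ | ⟨e, -⟩
    · rw [add_left_cancel e]
    · exact absurd (e ▸ h.2.1) h'.2.2

end Circulant

/-- A simple, 4-regular (`m, −m, n, −n` pairwise distinct and nonzero mod `N`), connected
(`gcd(m,n,N) = 1`) cyclic graph `C^N_{m,n}` is completed primitive, with loop order
`ℓ = N − 2`. -/
theorem cyclicGraph_completedPrimitive (N : ℕ) [NeZero N] (m n : ℤ)
    (hm0 : (m : ZMod N) ≠ 0) (hn0 : (n : ZMod N) ≠ 0)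
    (h2m : (m : ZMod N) ≠ -(m : ZMod N)) (h2n : (n : ZMod N) ≠ -(n : ZMod N))
    (hmn : (m : ZMod N) ≠ (n : ZMod N)) (hmn' : (m : ZMod N) ≠ -(n : ZMod N))
    (hgcd : Int.gcd m (Int.gcd n (N : ℤ)) = 1) :
    CompletedPrimitive (cyclicGraph N (m : ZMod N) (n : ZMod N)) ∧
    Fintype.card (ZMod N) - 2 = N - 2 := by
  have hg : ∃ a b : ZMod N, a * (m : ZMod N) + b * (n : ZMod N) = 1 := by
    have e1 := Int.gcd_eq_gcd_ab m (Int.gcd n (N : ℤ))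
    have e3 := congrArg (Int.cast : ℤ → ZMod N) (Int.gcd_eq_gcd_ab n (N : ℤ))
    have e2 := congrArg (Int.cast : ℤ → ZMod N) e1
    rw [hgcd] at e2
    rw [Int.cast_add, Int.cast_mul, Int.cast_mul, Int.cast_natCast (N : ℕ), ZMod.natCast_self,
      zero_mul, add_zero] at e3
    rw [Int.cast_add, Int.cast_mul, Int.cast_mul, e3, Int.cast_natCast, Nat.cast_one] at e2
    exact ⟨(Int.gcdA m (Int.gcd n (N : ℤ)) : ℤ),
      (Int.gcdA n (N : ℤ) : ℤ) * (Int.gcdB m (Int.gcd n (N : ℤ)) : ℤ), by linear_combination -e2⟩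
  refine ⟨⟨fun v => ?_, ?_, ?_, fun A hA hAc => ?_⟩, by rw [ZMod.card]⟩
  · rw [← SimpleGraph.card_neighborFinset_eq_degree, ← card_steps h2m h2n hmn hmn',
      ← Finset.card_image_of_injective {(m : ZMod N), -(m : ZMod N), (n : ZMod N), -(n : ZMod N)}
        (add_right_injective v)]
    congr 1
    ext w
    rw [SimpleGraph.mem_neighborFinset, cyclicGraph_adj hm0 hn0]
    simp
  · rw [SimpleGraph.connected_iff_exists_forall_reachable]
    refine ⟨0, gen_induction hg _ (fun z hz => ?_) (fun z hz => ?_) (SimpleGraph.Reachable.refl 0)⟩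
    · exact hz.trans ((cyclicGraph_adj hm0 hn0 _ _).2 (by simp)).reachable
    · exact hz.trans ((cyclicGraph_adj hm0 hn0 _ _).2 (by simp)).reachable
  · have := Finset.card_le_univ
      ({(m : ZMod N), -(m : ZMod N), (n : ZMod N), -(n : ZMod N)} : Finset (ZMod N))
    rw [card_steps h2m h2n hmn hmn'] at this
    omega
  · have h1 := three_le_exits hg hm0 hn0 h2m h2n hmn hmn' hA (by convert hAc)
    have h2 := sum_exits_le_cut hm0 hn0 h2m h2n hmn hmn' A
    omega
end

section
/- The Lebesgue integral over three-dimensional Euclidean space ∫_{ℝ³} (1 + ‖p‖²)^{−2} dp equals π². (Equivalently, the period of the one-loop completed primitive graph P₁ equals 1.) -/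
/-!
The integrand is radial, so polar coordinates turn the integral into
`3 · vol(B) · ∫₀^∞ r² (1 + r²)⁻² dr`, where `vol(B) = 4π/3` is the volume of the unit ball of `ℝ³`.
The radial integral equals `π / 4`, because `(arctan r - r / (1 + r²)) / 2` is an antiderivative
of its integrand, vanishing at `0` and tending to `π / 4` at infinity.
-/

open MeasureTheory Filter Topology Set in
lemma integral_Ioi_sq_mul_inv_one_add_sq_sq :
    ∫ r in Ioi (0 : ℝ), r ^ 2 * ((1 + r ^ 2) ^ 2)⁻¹ = Real.pi / 4 := by
  have hderiv : ∀ r ∈ Ici (0 : ℝ), HasDerivAt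
      (fun r : ℝ => (Real.arctan r - r / (1 + r ^ 2)) / 2) (r ^ 2 * ((1 + r ^ 2) ^ 2)⁻¹) r := by
    intro r _
    have hne : (1 + r ^ 2 : ℝ) ≠ 0 := by positivity
    have hden : HasDerivAt (fun r : ℝ => 1 + r ^ 2) (2 * r) r := by
      simpa using (hasDerivAt_pow 2 r).const_add 1
    have h := ((Real.hasDerivAt_arctan r).sub ((hasDerivAt_id r).div hden hne)).div_const 2
    refine h.congr_deriv ?_
    simp only [id]
    field_simp
    ring
  have hquot : Tendsto (fun r : ℝ => r / (1 + r ^ 2)) atTop (𝓝 0) := by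
    refine squeeze_zero' ?_ ?_ tendsto_inv_atTop_zero
    · filter_upwards [eventually_ge_atTop 0] with r hr
      positivity
    · filter_upwards [eventually_gt_atTop 0] with r hr
      rw [div_le_iff₀ (by positivity), inv_mul_eq_div, le_div_iff₀ hr]
      nlinarith
  have hlim : Tendsto (fun r : ℝ => (Real.arctan r - r / (1 + r ^ 2)) / 2) atTop
      (𝓝 ((Real.pi / 2 - 0) / 2)) :=
    ((tendsto_nhds_of_tendsto_nhdsWithin Real.tendsto_arctan_atTop).sub hquot).div_const 2
  rw [integral_Ioi_of_hasDerivAt_of_nonneg' hderiv (fun r _ => by positivity) hlim]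
  simp
  ring

/-- The period of the one-loop completed primitive graph `P₁`:
`∫_{ℝ³} (1 + ‖p‖²)⁻² dp = π²`. -/
theorem integral_one_loop :
    (∫ p : EuclideanSpace ℝ (Fin 3), ((1 + ‖p‖ ^ 2) ^ 2)⁻¹) = Real.pi ^ 2 := by
  have hball : MeasureTheory.volume.real (Metric.ball (0 : EuclideanSpace ℝ (Fin 3)) 1) =
      Real.pi * 4 / 3 := by
    rw [MeasureTheory.measureReal_def, EuclideanSpace.volume_ball_fin_three]
    simp [ENNReal.toReal_ofReal (show 0 ≤ Real.pi * 4 / 3 by positivity)]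
  rw [MeasureTheory.integral_fun_norm_addHaar MeasureTheory.volume
    (fun r : ℝ => ((1 + r ^ 2) ^ 2)⁻¹), hball]
  simp only [finrank_euclideanSpace_fin, smul_eq_mul, nsmul_eq_mul, Nat.add_one_sub_one,
    integral_Ioi_sq_mul_inv_one_add_sq_sq]
  push_cast
  ring
end

section
/- Let e ∈ ℝ⁴ be any unit vector. Then the Lebesgue integral ∫_{ℝ⁴×ℝ⁴} ( ‖e − x‖² · ‖x‖² · ‖x − y‖² · ‖y‖² · ‖y − e‖² )^{−1} dx dy equals 6 π⁴ ζ(3), where ζ(3) = Σ_{k=1}^∞ k^{−3}. (Equivalently, the period of the completed primitive graph P₃, the complete graph K₅, equals 6ζ(3).) -/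
/-!
Since `‖e‖ = 1`, a point `x ∈ ℝ⁴` has the axial coordinates `a = ⟪e, x⟫` and `b = ‖x - a e‖ ≥ 0`.
Averaging `‖x - y‖⁻²` over the rotations of `y` that fix `e` (`lintegral_sin_div`) produces
`(4 b b')⁻¹ log (|z - w̄|² / |z - w|²)` with `z = a + i b`, `w = a' + i b'`, i.e. the Green function
of the upper half-plane. In logarithmic polar coordinates `z = exp (u + i θ)`, `w = exp (v + i φ)`
the integral becomes
`4 π² ∫∫ du dv ∫₀^π ∫₀^π P_u(θ) P_v(φ) Λ_{u-v}(θ, φ) dθ dφ`, where both kernels have explicit sine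
series:
* `P_u(θ) = sin θ / (2 (cosh u - cos θ)) = ∑_{n ≥ 1} exp (-n|u|) sin nθ` (`hasSum_pk`),
* `Λ_w(θ, φ) = log ((cosh w - cos (θ + φ)) / (cosh w - cos (θ - φ)))
    = 4 ∑_{n ≥ 1} n⁻¹ exp (-n|w|) sin nθ sin nφ` (`hasSum_lam`).

Orthogonality of the sines on `[0, π]` turns the angular integral into
`π² ∑ n⁻¹ exp (-n (|u| + |v| + |u - v|))` (`lintegral_angles`), and
`∫∫ exp (-n (|u| + |v| + |u - v|)) du dv = 3 / (2 n²)` (`radial`). Altogether one gets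
`4 π⁴ ∑ n⁻¹ · 3 / (2 n²) = 6 π⁴ ζ(3)`.

The integral is handled as a lower Lebesgue integral, so that Tonelli applies and the
finiteness of the integral comes out of the computation. The only sign-changing series is the sine
series, which is integrated termwise for fixed `u, v` with `u ≠ 0`, `v ≠ 0`, `u ≠ v`, where it
converges uniformly.
-/

open Real MeasureTheory Set
open scoped ENNReal

local notation "E4" => EuclideanSpace ℝ (Fin 4)

/-! ### Sine series of the two kernels -/

/-- The kernel `P_u(θ) = Im (t e^{iθ} / (1 - t e^{iθ}))`, `t = exp (-|u|)`,
a conjugate Poisson kernel. -/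
noncomputable def pk (u θ : ℝ) : ℝ := sin θ / (2 * (cosh u - cos θ))

/-- The kernel `Λ_w(θ, φ)`: twice the Green function of the upper half-plane between
`exp (u + i θ)` and `exp (v + i φ)` with `u - v = w`. -/
noncomputable def lam (w θ φ : ℝ) : ℝ := log ((cosh w - cos (θ + φ)) / (cosh w - cos (θ - φ)))

lemma cosh_sub_cos_pos {u : ℝ} (hu : u ≠ 0) (θ : ℝ) : 0 < cosh u - cos θ := by
  have h1 := one_lt_cosh.2 hu
  have h2 := cos_le_one θ
  linarith

lemma normSq_one_sub (t θ : ℝ) :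
    Complex.normSq (1 - (t : ℂ) * Complex.exp (θ * Complex.I)) = 1 - 2 * t * cos θ + t ^ 2 := by
  have e2 := sin_sq_add_cos_sq θ
  rw [Complex.exp_mul_I]
  simp only [← Complex.ofReal_cos, ← Complex.ofReal_sin]
  rw [Complex.normSq_apply]
  simp [-Complex.ofReal_cos, -Complex.ofReal_sin]
  linear_combination t ^ 2 * e2

lemma exp_cosh (u θ : ℝ) :
    1 - 2 * exp (-|u|) * cos θ + exp (-|u|) ^ 2 = 2 * exp (-|u|) * (cosh u - cos θ) := by
  have e1 : exp (-|u|) * exp |u| = 1 := by rw [← exp_add]; simp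
  rw [← cosh_abs, cosh_eq]
  linear_combination - e1

lemma term_pow (t θ : ℝ) (n : ℕ) :
    ((t : ℂ) * Complex.exp (θ * Complex.I)) ^ n =
      ((t ^ n * cos (n * θ) : ℝ) : ℂ) + ((t ^ n * sin (n * θ) : ℝ) : ℂ) * Complex.I := by
  rw [mul_pow, ← Complex.exp_nat_mul, ← mul_assoc, Complex.exp_mul_I]
  push_cast
  ring

lemma exp_lt {u : ℝ} (hu : u ≠ 0) : exp (-|u|) < 1 := by simpa using hu

lemma hasSum_pk {u : ℝ} (hu : u ≠ 0) (θ : ℝ) :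
    HasSum (fun n : ℕ => exp (-|u|) ^ (n + 1) * sin ((n + 1 : ℕ) * θ)) (pk u θ) := by
  have hp := cosh_sub_cos_pos hu θ
  have he := exp_pos (-|u|)
  have hlt := exp_lt hu
  have hcosh := exp_cosh u θ
  set t := exp (-|u|)
  set z : ℂ := (t : ℂ) * Complex.exp (θ * Complex.I) with hz
  have hn : ‖z‖ < 1 := by
    rw [hz, norm_mul, Complex.norm_exp_ofReal_mul_I, mul_one, Complex.norm_real, norm_eq_abs,
      abs_of_pos he]
    exact hlt
  have h := Complex.hasSum_im ((hasSum_geometric_of_norm_lt_one hn).mul_left z)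
  convert! h using 1
  · ext n
    rw [← pow_succ', hz, term_pow, Complex.add_im, Complex.im_ofReal_mul, Complex.ofReal_im]
    simp
  · have h2 : z * (1 - z)⁻¹ = (1 - z)⁻¹ - 1 := by
      have : (1 - z) ≠ 0 := by
        intro h0
        have : z = 1 := by linear_combination -h0
        rw [this] at hn; simp at hn
      field_simp; ring
    rw [h2, Complex.sub_im, Complex.inv_im, hz, normSq_one_sub, hcosh, Complex.exp_mul_I]
    simp only [← Complex.ofReal_cos, ← Complex.ofReal_sin]
    simp [pk, -Complex.ofReal_cos, -Complex.ofReal_sin]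
    field_simp

/-- The real part of the Taylor series of `-log (1 - z)` at `z = exp (-|w| + i α)`. -/
lemma hasSum_log {w : ℝ} (hw : w ≠ 0) (α : ℝ) :
    HasSum (fun n : ℕ => exp (-|w|) ^ (n + 1) * cos ((n + 1 : ℕ) * α) / (n + 1 : ℕ))
      (- (log (2 * exp (-|w|) * (cosh w - cos α)) / 2)) := by
  have he := exp_pos (-|w|)
  have hlt := exp_lt hw
  rw [← exp_cosh]
  set t := exp (-|w|)
  set z : ℂ := (t : ℂ) * Complex.exp (α * Complex.I) with hz
  have hn : ‖z‖ < 1 := by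
    rw [hz, norm_mul, Complex.norm_exp_ofReal_mul_I, mul_one, Complex.norm_real, norm_eq_abs,
      abs_of_pos he]
    exact hlt
  have h := Complex.hasSum_re (Complex.hasSum_taylorSeries_neg_log' hn)
  convert! h using 1
  · ext n
    have : ((n : ℂ) + 1) = ((n + 1 : ℝ) : ℂ) := by push_cast; rfl
    rw [this, hz, term_pow, Complex.div_ofReal_re, Complex.add_re, Complex.re_ofReal_mul,
      Complex.ofReal_re]
    simp
  · rw [Complex.neg_re, Complex.log_re, ← normSq_one_sub, Complex.normSq_eq_norm_sq, log_pow, hz]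
    push_cast
    ring

lemma hasSum_lam {w : ℝ} (hw : w ≠ 0) (θ φ : ℝ) :
    HasSum (fun n : ℕ => 4 * exp (-|w|) ^ (n + 1) / (n + 1 : ℕ)
      * sin ((n + 1 : ℕ) * θ) * sin ((n + 1 : ℕ) * φ)) (lam w θ φ) := by
  have h := ((hasSum_log hw (θ - φ)).sub (hasSum_log hw (θ + φ))).mul_left 2
  have hp := cosh_sub_cos_pos hw (θ + φ)
  have hm := cosh_sub_cos_pos hw (θ - φ)
  have he := exp_pos (-|w|)
  convert! h using 1
  · ext n
    rw [mul_sub (_ : ℝ) θ φ, mul_add (_ : ℝ) θ φ, cos_sub, cos_add]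
    ring
  · rw [lam, log_div hp.ne' hm.ne', log_mul (by positivity) hp.ne', log_mul (by positivity) hm.ne']
    ring

/-! ### Integration over the angles -/

lemma integral_sin_sin (n k : ℕ) :
    ∫ θ in (0:ℝ)..π, sin ((n + 1 : ℕ) * θ) * sin ((k + 1 : ℕ) * θ) =
      if n = k then π / 2 else 0 := by
  have h0 : ∀ m : ℤ, m ≠ 0 → ∫ θ in (0:ℝ)..π, cos (m * θ) = 0 := by
    intro m hm
    have hm' : (m : ℝ) ≠ 0 := by exact_mod_cast hm
    rw [intervalIntegral.integral_comp_mul_left _ hm', integral_cos]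
    simp [sin_int_mul_pi]
  have h1 : ∀ θ : ℝ, sin ((n + 1 : ℕ) * θ) * sin ((k + 1 : ℕ) * θ) =
      (1/2) * (cos (((n - k : ℤ) : ℝ) * θ)) - (1/2) * cos (((n + k + 2 : ℤ) : ℝ) * θ) := by
    intro θ
    have e1 : ((n - k : ℤ) : ℝ) * θ = (n + 1 : ℕ) * θ - (k + 1 : ℕ) * θ := by push_cast; ring
    have e2 : ((n + k + 2 : ℤ) : ℝ) * θ = (n + 1 : ℕ) * θ + (k + 1 : ℕ) * θ := by push_cast; ring
    rw [e1, e2, cos_sub, cos_add]; ring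
  simp_rw [h1]
  rw [intervalIntegral.integral_sub (by apply Continuous.intervalIntegrable; fun_prop)
    (by apply Continuous.intervalIntegrable; fun_prop), intervalIntegral.integral_const_mul,
    intervalIntegral.integral_const_mul, h0 (n + k + 2) (by omega)]
  split_ifs with h
  · subst h; simp; ring
  · rw [h0 _ (by omega)]; simp

lemma continuous_pk {u : ℝ} (hu : u ≠ 0) : Continuous (pk u) := by
  unfold pk
  have := fun θ => cosh_sub_cos_pos hu θ
  exact continuous_sin.div (by fun_prop) (fun θ => by have := this θ; positivity)

lemma continuous_lam {w : ℝ} (hw : w ≠ 0) (θ : ℝ) : Continuous (lam w θ) := by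
  unfold lam
  have := fun θ => cosh_sub_cos_pos hw θ
  refine Continuous.log (Continuous.div (by fun_prop) (by fun_prop) fun φ => (this _).ne')
    (fun φ => (div_pos (this _) (this _)).ne')

lemma summable_geo {u : ℝ} (hu : u ≠ 0) : Summable fun n : ℕ => exp (-|u|) ^ (n + 1) :=
  (summable_nat_add_iff 1).2 (summable_geometric_of_lt_one (exp_pos _).le (exp_lt hu))

/-- Termwise integration over `[0, π]` of an absolutely convergent sine series against a continuous
function. -/
lemma hasSum_integral_sin {c : ℕ → ℝ} (hc : Summable fun n => |c n|) {f g : ℝ → ℝ}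
    (hg : Continuous g)
    (hf : ∀ θ, HasSum (fun n : ℕ => c n * sin ((n + 1 : ℕ) * θ)) (f θ)) :
    HasSum (fun n : ℕ => c n * ∫ θ in (0:ℝ)..π, g θ * sin ((n + 1 : ℕ) * θ))
      (∫ θ in (0:ℝ)..π, g θ * f θ) := by
  obtain ⟨C, hC⟩ := (isCompact_Icc (a := (0:ℝ)) (b := π)).exists_bound_of_continuousOn
    hg.continuousOn
  have hC0 : 0 ≤ C := (norm_nonneg _).trans (hC 0 ⟨le_rfl, pi_pos.le⟩)
  have key := intervalIntegral.hasSum_integral_of_dominated_convergence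
    (μ := volume) (a := 0) (b := π) (F := fun n θ => g θ * (c n * sin ((n + 1 : ℕ) * θ)))
    (f := fun θ => g θ * f θ) (fun n _ => C * |c n|)
    (fun n => by apply Continuous.aestronglyMeasurable; fun_prop)
    (fun n => Filter.Eventually.of_forall fun θ hθ => by
      rw [uIoc_of_le pi_pos.le] at hθ
      rw [norm_mul, norm_mul, norm_eq_abs (c n), norm_eq_abs (sin _)]
      have := hC θ ⟨hθ.1.le, hθ.2⟩
      have h2 := abs_sin_le_one ((n + 1 : ℕ) * θ)
      calc ‖g θ‖ * (|c n| * |sin ((n + 1 : ℕ) * θ)|) ≤ C * (|c n| * 1) := by gcongr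
        _ = _ := by ring)
    (Filter.Eventually.of_forall fun θ _ => hc.mul_left C)
    (by simp)
    (Filter.Eventually.of_forall fun θ _ => (hf θ).mul_left _)
  convert! key using 1
  ext n
  rw [← intervalIntegral.integral_const_mul]
  congr 1; ext θ; ring

lemma integral_pk_sin {u : ℝ} (hu : u ≠ 0) (k : ℕ) :
    ∫ θ in (0:ℝ)..π, pk u θ * sin ((k + 1 : ℕ) * θ) = π / 2 * exp (-|u|) ^ (k + 1) := by
  have h := hasSum_integral_sin (c := fun n => exp (-|u|) ^ (n + 1)) (f := pk u)
    (g := fun θ => sin ((k + 1 : ℕ) * θ))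
    (by simpa [abs_of_pos (exp_pos _)] using summable_geo hu) (by fun_prop) (hasSum_pk hu)
  simp_rw [integral_sin_sin] at h
  have h2 := h.unique (hasSum_single k (fun n hn => by rw [if_neg (Ne.symm hn)]; simp))
  simp only [if_true] at h2
  rw [mul_comm (π / 2), ← h2]
  congr 1; ext θ; ring

lemma summable_aux {v w : ℝ} (hv : v ≠ 0) (C : ℝ) : Summable fun n : ℕ =>
    |C * (exp (-|w|) ^ (n + 1) / (n + 1 : ℕ) * exp (-|v|) ^ (n + 1))| := by
  simp_rw [abs_mul C]
  refine Summable.mul_left _ (Summable.of_nonneg_of_le (fun n => by positivity) (fun n => ?_) (summable_geo hv))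
  rw [abs_of_pos (by positivity)]
  have h1 : exp (-|w|) ^ (n + 1) ≤ 1 := pow_le_one₀ (exp_pos _).le (by simp)
  have h2 : exp (-|w|) ^ (n + 1) / (n + 1 : ℕ) ≤ 1 := by
    rw [div_le_one (by positivity)]
    refine h1.trans ?_
    push_cast; linarith [(Nat.cast_nonneg n : (0:ℝ) ≤ n)]
  calc _ ≤ 1 * exp (-|v|) ^ (n + 1) := by gcongr
    _ = _ := one_mul _

lemma hasSum_inner {v w : ℝ} (hv : v ≠ 0) (hw : w ≠ 0) (θ : ℝ) :
    HasSum (fun n : ℕ => 2 * π * (exp (-|w|) ^ (n + 1) / (n + 1 : ℕ) * exp (-|v|) ^ (n + 1))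
      * sin ((n + 1 : ℕ) * θ)) (∫ φ in (0:ℝ)..π, pk v φ * lam w θ φ) := by
  have h := hasSum_integral_sin (c := fun n => 4 * exp (-|w|) ^ (n + 1) / (n + 1 : ℕ)
      * sin ((n + 1 : ℕ) * θ)) (f := lam w θ) (g := pk v)
    (by
      refine Summable.of_nonneg_of_le (fun n => abs_nonneg _) (fun n => ?_) 
        ((summable_geo hw).mul_left 4)
      rw [abs_mul, abs_of_pos (by positivity)]
      have h2 := abs_sin_le_one ((n + 1 : ℕ) * θ)
      calc _ ≤ 4 * exp (-|w|) ^ (n + 1) / (n + 1 : ℕ) * 1 := by gcongr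
        _ ≤ 4 * exp (-|w|) ^ (n + 1) / 1 * 1 := by
          gcongr
          push_cast; linarith [(Nat.cast_nonneg n : (0:ℝ) ≤ n)]
        _ = _ := by ring) 
    (continuous_pk hv) (hasSum_lam hw θ)
  convert! h using 1
  ext n
  rw [integral_pk_sin hv]
  ring

lemma hasSum_outer {u v w : ℝ} (hu : u ≠ 0) (hv : v ≠ 0) (hw : w ≠ 0) :
    HasSum (fun n : ℕ => π ^ 2 / (n + 1 : ℕ) * (exp (-|u|) * exp (-|v|) * exp (-|w|)) ^ (n + 1))
      (∫ θ in (0:ℝ)..π, pk u θ * ∫ φ in (0:ℝ)..π, pk v φ * lam w θ φ) := by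
  have h := hasSum_integral_sin (summable_aux (w := w) hv (2 * π)) (continuous_pk hu)
    (hasSum_inner hv hw)
  convert! h using 1
  ext n
  rw [integral_pk_sin hu]
  ring

lemma continuous_angle {v w : ℝ} (hv : v ≠ 0) (hw : w ≠ 0) :
    Continuous fun θ => ∫ φ in (0:ℝ)..π, pk v φ * lam w θ φ := by
  have : (fun θ => ∫ φ in (0:ℝ)..π, pk v φ * lam w θ φ) = fun θ => ∑' n : ℕ, 2 * π * (exp (-|w|) ^ (n + 1) / (n + 1 : ℕ) * exp (-|v|) ^ (n + 1))
      * sin ((n + 1 : ℕ) * θ) := funext fun θ => (hasSum_inner hv hw θ).tsum_eq.symm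
  rw [this]
  refine continuous_tsum (fun n => by fun_prop) (summable_aux (w := w) hv (2 * π)) fun n θ => ?_
  rw [norm_mul, norm_eq_abs, norm_eq_abs]
  exact mul_le_of_le_one_right (abs_nonneg _) (abs_sin_le_one _)

lemma pk_nonneg {u θ : ℝ} (hθ : θ ∈ Ioo 0 π) : 0 ≤ pk u θ := by
  unfold pk
  have h1 := one_le_cosh u
  have h2 := cos_le_one θ
  have := sin_nonneg_of_mem_Icc ⟨hθ.1.le, hθ.2.le⟩
  exact div_nonneg this (by linarith)

lemma lam_nonneg {w θ φ : ℝ} (hθ : θ ∈ Ioo 0 π) (hφ : φ ∈ Ioo 0 π) (hw : w ≠ 0) : 0 ≤ lam w θ φ := by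
  unfold lam
  have h1 := sin_nonneg_of_mem_Icc ⟨hθ.1.le, hθ.2.le⟩
  have h2 := sin_nonneg_of_mem_Icc ⟨hφ.1.le, hφ.2.le⟩
  apply log_nonneg
  rw [one_le_div (cosh_sub_cos_pos hw _), cos_add, cos_sub]
  nlinarith

/-- The exponential of the sum `|u| + |v| + |w|` collects one factor from each of the three sine
series; orthogonality leaves only the terms with the same index in all of them. -/
lemma lintegral_angles {u v w : ℝ} (hu : u ≠ 0) (hv : v ≠ 0) (hw : w ≠ 0) :
    ∫⁻ θ in Ioo 0 π, ∫⁻ φ in Ioo 0 π, ENNReal.ofReal (pk u θ * (pk v φ * lam w θ φ)) =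
      ∑' n : ℕ, ENNReal.ofReal (π ^ 2 / (n + 1 : ℕ) * exp (-(n + 1 : ℕ) * (|u| + |v| + |w|))) := by
  have hin : ∀ θ ∈ Ioo 0 π, ∫⁻ φ in Ioo 0 π, ENNReal.ofReal (pk u θ * (pk v φ * lam w θ φ)) =
      ENNReal.ofReal (pk u θ * ∫ φ in (0:ℝ)..π, pk v φ * lam w θ φ) := by
    intro θ hθ
    rw [← ofReal_integral_eq_lintegral_ofReal, integral_const_mul,
      intervalIntegral.integral_of_le pi_pos.le, integral_Ioc_eq_integral_Ioo]
    · have hc : Continuous fun φ => pk u θ * (pk v φ * lam w θ φ) :=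
        continuous_const.mul ((continuous_pk hv).mul (continuous_lam hw θ))
      exact (hc.integrableOn_Icc (a := 0) (b := π)).mono_set Ioo_subset_Icc_self
    · filter_upwards [self_mem_ae_restrict measurableSet_Ioo] with φ hφ
      exact mul_nonneg (pk_nonneg hθ) (mul_nonneg (pk_nonneg hφ) (lam_nonneg hθ hφ hw))
  rw [setLIntegral_congr_fun measurableSet_Ioo hin, ← ofReal_integral_eq_lintegral_ofReal,
    ← integral_Ioc_eq_integral_Ioo, ← intervalIntegral.integral_of_le pi_pos.le,
    ← (hasSum_outer hu hv hw).tsum_eq, ENNReal.ofReal_tsum_of_nonneg]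
  · congr 1; ext n
    congr 2
    rw [← exp_add, ← exp_add, ← exp_nat_mul]
    congr 1; ring
  · intro n; positivity
  · exact (hasSum_outer hu hv hw).summable
  · exact ((((continuous_pk hu).mul (continuous_angle hv hw))).integrableOn_Icc
      (a := 0) (b := π)).mono_set Ioo_subset_Icc_self
  · filter_upwards [self_mem_ae_restrict measurableSet_Ioo] with θ hθ
    refine mul_nonneg (pk_nonneg hθ) ?_
    rw [intervalIntegral.integral_of_le pi_pos.le, integral_Ioc_eq_integral_Ioo]
    refine setIntegral_nonneg measurableSet_Ioo fun φ hφ => ?_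
    exact mul_nonneg (pk_nonneg hφ) (lam_nonneg hθ hφ hw)


/-! ### Integration over the radii -/

lemma tendsto_aux {c : ℝ} (hc : 0 < c) (A B : ℝ) :
    Filter.Tendsto (fun u => -(A + B * u) * exp (-(2 * c * u))) Filter.atTop (nhds 0) := by
  have h2 : Filter.Tendsto (fun u : ℝ => 2 * c * u) Filter.atTop Filter.atTop :=
    Filter.tendsto_id.const_mul_atTop (by positivity)
  have h0 := ((tendsto_pow_mul_exp_neg_atTop_nhds_zero 0).comp h2).const_mul (-A)
  have h1 := ((tendsto_pow_mul_exp_neg_atTop_nhds_zero 1).comp h2).const_mul (-B / (2 * c))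
  convert! h0.add h1 using 1
  · ext u; simp; field_simp; ring
  · simp

lemma radial_outer {c : ℝ} (hc : 0 < c) :
    ∫⁻ u : ℝ, ENNReal.ofReal (exp (-(2 * c * |u|)) * (1 / c + |u|)) =
      ENNReal.ofReal (3 / (2 * c ^ 2)) := by
  -- an explicit antiderivative on the half-line
  have hderiv : ∀ u ∈ Ici (0:ℝ), HasDerivAt
      (fun u => -(3 / (4 * c ^ 2) + 1 / (2 * c) * u) * exp (-(2 * c * u)))
      (exp (-(2 * c * u)) * (1 / c + u)) u := by
    intro u _
    have h1 : HasDerivAt (fun u => -(3 / (4 * c ^ 2) + 1 / (2 * c) * u)) (-(1 / (2 * c) * 1)) u :=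
      (((hasDerivAt_id u).const_mul (1 / (2 * c))).const_add _).neg
    have h2 : HasDerivAt (fun u => exp (-(2 * c * u))) (exp (-(2 * c * u)) * -(2 * c * 1)) u :=
      (((hasDerivAt_id u).const_mul (2 * c)).neg).exp
    convert! h1.mul h2 using 1
    field_simp; ring
  have hpos : ∀ u ∈ Ioi (0:ℝ), 0 ≤ exp (-(2 * c * u)) * (1 / c + u) := by
    intro u hu
    have : 0 < u := hu
    positivity
  have hval := integral_Ioi_of_hasDerivAt_of_nonneg' hderiv hpos (tendsto_aux hc _ _)
  have habs := integral_comp_abs (f := fun u => exp (-(2 * c * u)) * (1 / c + u))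
  have hi : Integrable fun u : ℝ => exp (-(2 * c * |u|)) * (1 / c + |u|) := by
    -- a non-integrable function would have Bochner integral `0`
    refine Integrable.of_integral_ne_zero ?_
    rw [habs, hval]
    simp
    positivity
  rw [← ofReal_integral_eq_lintegral_ofReal hi, habs, hval]
  · congr 1
    simp; field_simp; ring
  · exact Filter.Eventually.of_forall fun u => by simp only [Pi.zero_apply]; positivity

/-- The exponent is piecewise linear in `v`, with breaks at `0` and `u`. -/
lemma radial_inner_of_nonneg {c u : ℝ} (hc : 0 < c) (hu : 0 ≤ u) :
    ∫⁻ v : ℝ, ENNReal.ofReal (exp (-c * (|u| + |v| + |u - v|))) =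
      ENNReal.ofReal (exp (-(2 * c * u)) * (1 / c + u)) := by
  rw [← setLIntegral_univ, ← Iic_union_Ioi (a := (0:ℝ)), lintegral_union measurableSet_Ioi
    (Iic_disjoint_Ioi le_rfl), ← Ioc_union_Ioi_eq_Ioi hu, lintegral_union measurableSet_Ioi
    (Ioc_disjoint_Ioi le_rfl)]
  have h1 : ∫⁻ v in Iic (0:ℝ), ENNReal.ofReal (exp (-c * (|u| + |v| + |u - v|))) =
      ENNReal.ofReal (exp (-(2 * c * u)) * (1 / (2 * c))) := by
    have : ∀ v ∈ Iic (0:ℝ), ENNReal.ofReal (exp (-c * (|u| + |v| + |u - v|))) =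
        ENNReal.ofReal (exp (-(2 * c * u)) * exp ((2 * c) * v)) := by
      intro v hv
      have hv : v ≤ 0 := hv
      rw [abs_of_nonneg hu, abs_of_nonpos hv, abs_of_nonneg (by linarith), ← exp_add]
      ring_nf
    rw [setLIntegral_congr_fun measurableSet_Iic this, ← ofReal_integral_eq_lintegral_ofReal,
      integral_const_mul, integral_exp_mul_Iic (by positivity)]
    · simp
    · exact (integrableOn_exp_mul_Iic (by positivity) _).const_mul _
    · exact Filter.Eventually.of_forall fun u => by simp only [Pi.zero_apply]; positivity
  have h2 : ∫⁻ v in Ioc 0 u, ENNReal.ofReal (exp (-c * (|u| + |v| + |u - v|))) =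
      ENNReal.ofReal (exp (-(2 * c * u)) * u) := by
    have : ∀ v ∈ Ioc 0 u, ENNReal.ofReal (exp (-c * (|u| + |v| + |u - v|))) =
        ENNReal.ofReal (exp (-(2 * c * u))) := by
      intro v hv
      rw [abs_of_nonneg hu, abs_of_pos hv.1, abs_of_nonneg (by linarith [hv.2])]
      ring_nf
    rw [setLIntegral_congr_fun measurableSet_Ioc this, setLIntegral_const, volume_Ioc,
      ENNReal.ofReal_mul (by positivity)]
    simp
  have h3 : ∫⁻ v in Ioi u, ENNReal.ofReal (exp (-c * (|u| + |v| + |u - v|))) =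
      ENNReal.ofReal (exp (-(2 * c * u)) * (1 / (2 * c))) := by
    have : ∀ v ∈ Ioi u, ENNReal.ofReal (exp (-c * (|u| + |v| + |u - v|))) =
        ENNReal.ofReal (exp ((-(2 * c)) * v)) := by
      intro v hv
      have hv : u < v := hv
      rw [abs_of_nonneg hu, abs_of_nonneg (by linarith), abs_of_nonpos (by linarith)]
      ring_nf
    rw [setLIntegral_congr_fun measurableSet_Ioi this, ← ofReal_integral_eq_lintegral_ofReal,
      integral_exp_mul_Ioi (by linarith)]
    · congr 1
      field_simp
    · exact (integrableOn_exp_mul_Ioi (by linarith) _)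
    · exact Filter.Eventually.of_forall fun u => by simp only [Pi.zero_apply]; positivity
  rw [h1, h2, h3, ← ENNReal.ofReal_add (by positivity) (by positivity),
    ← ENNReal.ofReal_add (by positivity) (by positivity)]
  congr 1; field_simp; ring

lemma radial_inner {c : ℝ} (hc : 0 < c) (u : ℝ) :
    ∫⁻ v : ℝ, ENNReal.ofReal (exp (-c * (|u| + |v| + |u - v|))) =
      ENNReal.ofReal (exp (-(2 * c * |u|)) * (1 / c + |u|)) := by
  rcases le_total 0 u with hu | hu
  · rw [radial_inner_of_nonneg hc hu, abs_of_nonneg hu]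
  · have := radial_inner_of_nonneg hc (neg_nonneg.2 hu)
    rw [abs_of_nonpos hu, ← this, ← lintegral_neg_eq_self]
    congr 1; ext v
    rw [abs_neg v, abs_neg u, abs_of_nonpos hu, ← abs_neg (-u - v)]
    congr 5; ring

lemma radial {c : ℝ} (hc : 0 < c) :
    ∫⁻ u : ℝ, ∫⁻ v : ℝ, ENNReal.ofReal (exp (-c * (|u| + |v| + |u - v|))) =
      ENNReal.ofReal (3 / (2 * c ^ 2)) := by
  simp_rw [radial_inner hc]
  exact radial_outer hc

/-! ### Coordinates on ℝ², ℝ³ and ℝ⁴ -/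

lemma lintegral_polar (f : ℝ → ℝ → ℝ≥0∞) (hf : Measurable (Function.uncurry f)) :
    ∫⁻ a, ∫⁻ b, f a b = ∫⁻ r in Ioi (0:ℝ), ∫⁻ θ in Ioo (-π) π,
      ENNReal.ofReal r * f (r * cos θ) (r * sin θ) := by
  have h := lintegral_comp_polarCoord_symm (Function.uncurry f)
  rw [← lintegral_prod (fun p : ℝ × ℝ => f p.1 p.2) hf.aemeasurable]
  have h2 : ∫⁻ p : ℝ × ℝ, f p.1 p.2 ∂(volume.prod volume) = ∫⁻ p : ℝ × ℝ, Function.uncurry f p := rfl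
  rw [h2, ← h, polarCoord_target, Measure.volume_eq_prod, ← Measure.prod_restrict,
    lintegral_prod]
  · simp [Function.uncurry]
  · apply Measurable.aemeasurable
    refine Measurable.mul (by fun_prop) (hf.comp continuous_polarCoord_symm.measurable)

lemma lintegral_plane_radial (h : ℝ → ℝ≥0∞) (hh : Measurable h) :
    ∫⁻ a, ∫⁻ b, h (a ^ 2 + b ^ 2) =
      ENNReal.ofReal (2 * π) * ∫⁻ r in Ioi (0:ℝ), ENNReal.ofReal r * h (r ^ 2) := by
  rw [lintegral_polar (fun a b => h (a ^ 2 + b ^ 2)) (hh.comp (by fun_prop)),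
    ← lintegral_const_mul _ (by fun_prop)]
  congr 1; ext r
  have : ∀ θ : ℝ, (r * cos θ) ^ 2 + (r * sin θ) ^ 2 = r ^ 2 := fun θ => by
    linear_combination r ^ 2 * sin_sq_add_cos_sq θ
  simp_rw [this]
  rw [setLIntegral_const, volume_Ioo, mul_comm]
  congr 2; ring

/-- Polar coordinates on the upper half-plane. -/
lemma lintegral_upper (f : ℝ → ℝ → ℝ≥0∞) (hf : Measurable (Function.uncurry f)) :
    ∫⁻ a, ∫⁻ b in Ioi (0:ℝ), f a b = ∫⁻ r in Ioi (0:ℝ), ∫⁻ θ in Ioo 0 π,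
      ENNReal.ofReal r * f (r * cos θ) (r * sin θ) := by
  have hm : Measurable (Function.uncurry fun a b => (Ioi (0:ℝ)).indicator (f a) b) := by
    have : (Function.uncurry fun a b => (Ioi (0:ℝ)).indicator (f a) b) =
        (Prod.snd ⁻¹' (Ioi (0:ℝ))).indicator (Function.uncurry f) := by
      ext ⟨a, b⟩; simp [indicator]
    rw [this]
    exact hf.indicator (measurable_snd measurableSet_Ioi)
  have h := lintegral_polar _ hm
  simp_rw [lintegral_indicator measurableSet_Ioi] at h
  rw [h]
  refine setLIntegral_congr_fun measurableSet_Ioi fun r hr => ?_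
  have hr : 0 < r := hr
  rw [← lintegral_indicator measurableSet_Ioo, ← lintegral_indicator measurableSet_Ioo]
  congr 1; ext θ
  simp only [indicator, mem_Ioo, mem_Ioi]
  by_cases h1 : -π < θ ∧ θ < π
  · by_cases h2 : 0 < θ
    · have := sin_pos_of_pos_of_lt_pi h2 h1.2
      have h3 : 0 < r * sin θ := by positivity
      simp only [h1, h2, h3, and_self, if_true]
    · have := sin_nonpos_of_nonpos_of_neg_pi_le (not_lt.1 h2) h1.1.le
      have h3 : ¬ 0 < r * sin θ := by nlinarith
      simp only [h1, h2, h3, and_self, if_true, if_false, false_and, mul_zero]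
  · rw [if_neg h1, if_neg (fun h => h1 ⟨by linarith [h.1, pi_pos], h.2⟩)]

lemma lintegral_Ioi_exp (f : ℝ → ℝ≥0∞) :
    ∫⁻ r in Ioi (0:ℝ), f r = ∫⁻ u : ℝ, ENNReal.ofReal (exp u) * f (exp u) := by
  have h := lintegral_image_eq_lintegral_abs_deriv_mul (s := univ) (f := exp) (f' := exp)
    MeasurableSet.univ (fun x _ => (hasDerivAt_exp x).hasDerivWithinAt) exp_injective.injOn f
  rw [image_univ, range_exp] at h
  rw [h, setLIntegral_univ]
  simp

/-- Logarithmic polar coordinates `a + i b = exp (u + i θ)` on the upper half-plane. -/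
lemma lintegral_upper_exp (f : ℝ → ℝ → ℝ≥0∞) (hf : Measurable (Function.uncurry f)) :
    ∫⁻ a, ∫⁻ b in Ioi (0:ℝ), f a b = ∫⁻ u : ℝ, ∫⁻ θ in Ioo 0 π,
      ENNReal.ofReal (exp u ^ 2) * f (exp u * cos θ) (exp u * sin θ) := by
  rw [lintegral_upper f hf, lintegral_Ioi_exp]
  congr 1; ext u
  rw [← lintegral_const_mul' _ _ ENNReal.ofReal_ne_top]
  congr 1; ext θ
  rw [pow_two, ENNReal.ofReal_mul (exp_pos u).le, mul_assoc]

/-- Spherical coordinates on `ℝ³` for a function of the first coordinate and the squared norm. -/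
lemma lintegral_space_axial (f : ℝ → ℝ → ℝ≥0∞) (hf : Measurable (Function.uncurry f)) :
    ∫⁻ b, ∫⁻ c, ∫⁻ d, f b (b ^ 2 + c ^ 2 + d ^ 2) =
      ENNReal.ofReal (2 * π) * ∫⁻ r in Ioi (0:ℝ), ∫⁻ α in Ioo 0 π,
        ENNReal.ofReal (r ^ 2 * sin α) * f (r * cos α) (r ^ 2) := by
  have h1 : ∀ b, ∫⁻ c, ∫⁻ d, f b (b ^ 2 + c ^ 2 + d ^ 2) =
      ENNReal.ofReal (2 * π) * ∫⁻ r in Ioi (0:ℝ), ENNReal.ofReal r * f b (b ^ 2 + r ^ 2) := by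
    intro b
    simp_rw [add_assoc]
    exact lintegral_plane_radial (fun q => f b (b ^ 2 + q))
      (hf.comp (f := fun q : ℝ => (b, b ^ 2 + q)) (by fun_prop))
  have hm : Measurable (Function.uncurry fun b r : ℝ => ENNReal.ofReal r * f b (b ^ 2 + r ^ 2)) :=
    Measurable.mul (by fun_prop) 
      (hf.comp (f := fun p : ℝ × ℝ => (p.1, p.1 ^ 2 + p.2 ^ 2)) (by fun_prop))
  simp_rw [h1]
  rw [lintegral_const_mul' _ _ ENNReal.ofReal_ne_top, lintegral_upper _ hm]
  congr 1
  refine setLIntegral_congr_fun measurableSet_Ioi fun r hr => ?_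
  have hr : 0 < r := hr
  refine setLIntegral_congr_fun measurableSet_Ioo fun α hα => ?_
  have : (r * cos α) ^ 2 + (r * sin α) ^ 2 = r ^ 2 := by
    linear_combination r ^ 2 * sin_sq_add_cos_sq α
  simp only [this]
  rw [← mul_assoc, ← ENNReal.ofReal_mul hr.le]
  congr 2; ring

lemma lintegral_space_radial (f : ℝ → ℝ≥0∞) (hf : Measurable f) :
    ∫⁻ b, ∫⁻ c, ∫⁻ d, f (b ^ 2 + c ^ 2 + d ^ 2) =
      ∫⁻ r in Ioi (0:ℝ), ENNReal.ofReal (4 * π * r ^ 2) * f (r ^ 2) := by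
  rw [lintegral_space_axial (fun _ q => f q) (hf.comp measurable_snd),
    ← lintegral_const_mul' _ _ ENNReal.ofReal_ne_top]
  refine setLIntegral_congr_fun measurableSet_Ioi fun r hr => ?_
  have hs : ∫⁻ α in Ioo 0 π, ENNReal.ofReal (r ^ 2 * sin α) = ENNReal.ofReal (r ^ 2 * 2) := by
    rw [← ofReal_integral_eq_lintegral_ofReal, ← integral_Ioc_eq_integral_Ioo,
      ← intervalIntegral.integral_of_le pi_pos.le, intervalIntegral.integral_const_mul, integral_sin]
    · norm_num
    · exact ((by fun_prop : Continuous fun α => r ^ 2 * sin α).integrableOn_Icc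
        (a := 0) (b := π)).mono_set Ioo_subset_Icc_self
    · filter_upwards [self_mem_ae_restrict measurableSet_Ioo] with α hα
      exact mul_nonneg (sq_nonneg r) (sin_nonneg_of_mem_Icc ⟨hα.1.le, hα.2.le⟩)
  rw [lintegral_mul_const _ (by fun_prop), hs, ← mul_assoc, ← ENNReal.ofReal_mul (by positivity)]
  congr 2; ring

lemma lintegral_fin_succ {n : ℕ} (f : (Fin (n + 1) → ℝ) → ℝ≥0∞) (hf : Measurable f) :
    ∫⁻ v, f v = ∫⁻ a : ℝ, ∫⁻ w : Fin n → ℝ, f (Fin.cons a w) := by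
  have h := (volume_preserving_piFinSuccAbove (fun _ : Fin (n + 1) => ℝ) 0).symm
  rw [← h.lintegral_comp hf, Measure.volume_eq_prod, lintegral_prod]
  · simp [MeasurableEquiv.piFinSuccAbove, Fin.insertNthEquiv]
  · exact (hf.comp h.measurable).aemeasurable

lemma lintegral_coords (f : ℝ → ℝ → ℝ → ℝ → ℝ≥0∞)
    (hf : Measurable fun p : ℝ × ℝ × ℝ × ℝ => f p.1 p.2.1 p.2.2.1 p.2.2.2) :
    ∫⁻ x : EuclideanSpace ℝ (Fin 4), f (x 0) (x 1) (x 2) (x 3) =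
      ∫⁻ a, ∫⁻ b, ∫⁻ c, ∫⁻ d, f a b c d := by
  have hF : Measurable fun v : Fin 4 → ℝ => f (v 0) (v 1) (v 2) (v 3) :=
    hf.comp (f := fun v : Fin 4 → ℝ => (v 0, v 1, v 2, v 3)) (by fun_prop)
  have h := (EuclideanSpace.volume_preserving_symm_measurableEquiv_toLp (Fin 4)).lintegral_comp hF
  refine Eq.trans h ?_
  rw [lintegral_fin_succ _ hF]
  congr 1; ext a
  refine (lintegral_fin_succ (fun w : Fin 3 → ℝ => f a (w 0) (w 1) (w 2))
    (hf.comp (f := fun w : Fin 3 → ℝ => (a, w 0, w 1, w 2)) (by fun_prop))).trans ?_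
  congr 1; ext b
  refine (lintegral_fin_succ (fun w : Fin 2 → ℝ => f a b (w 0) (w 1))
    (hf.comp (f := fun w : Fin 2 → ℝ => (a, b, w 0, w 1)) (by fun_prop))).trans ?_
  congr 1; ext c
  refine (lintegral_fin_succ (fun w : Fin 1 → ℝ => f a b c (w 0))
    (hf.comp (f := fun w : Fin 1 → ℝ => (a, b, c, w 0)) (by fun_prop))).trans ?_
  congr 1; ext d
  change ∫⁻ w : Fin 0 → ℝ, f a b c d = _
  rw [lintegral_const]
  simp [volume_pi]

/-! ### Reduction of the integral over ℝ⁴ × ℝ⁴ -/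

/-- The mean of `1 / (P - Q cos α)` over the sphere, up to normalisation. -/
lemma lintegral_sin_div {P Q : ℝ} (hQ : 0 < Q) (hP : Q < P) :
    ∫⁻ α in Ioo 0 π, ENNReal.ofReal (sin α / (P - Q * cos α)) =
      ENNReal.ofReal (1 / Q * log ((P + Q) / (P - Q))) := by
  have hpos : ∀ α, 0 < P - Q * cos α := fun α => by nlinarith [cos_le_one α]
  have hc : Continuous fun α => sin α / (P - Q * cos α) :=
    continuous_sin.div (by fun_prop) fun α => (hpos α).ne'
  rw [← ofReal_integral_eq_lintegral_ofReal, ← integral_Ioc_eq_integral_Ioo,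
    ← intervalIntegral.integral_of_le pi_pos.le]
  · congr 1
    rw [intervalIntegral.integral_eq_sub_of_hasDerivAt
      (f := fun α => 1 / Q * log (P - Q * cos α)) (fun α _ => ?_) (hc.intervalIntegrable _ _)]
    · rw [cos_pi, cos_zero, log_div (by linarith) (by linarith)]
      ring_nf
    · have h := (((hasDerivAt_cos α).const_mul Q).const_sub P).log (hpos α).ne'
      convert! h.const_mul (1 / Q) using 1
      have := (hpos α).ne'
      field_simp
  · exact (hc.integrableOn_Icc (a := 0) (b := π)).mono_set Ioo_subset_Icc_self
  · filter_upwards [self_mem_ae_restrict measurableSet_Ioo] with α hα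
    exact div_nonneg (sin_nonneg_of_mem_Icc ⟨hα.1.le, hα.2.le⟩) (hpos α).le

/-- The integral over `y ∈ ℝ⁴` of `(‖x - y‖² ‖y‖² ‖y - e‖²)⁻¹` for `x = (a, β, 0, 0)` and
`e = (1, 0, 0, 0)`. -/
noncomputable def kin (a β : ℝ) : ℝ≥0∞ := ∫⁻ y : E4, ENNReal.ofReal
  ((((y 0 - a) ^ 2 + (y 1 - β) ^ 2 + y 2 ^ 2 + y 3 ^ 2) * (y 0 ^ 2 + y 1 ^ 2 + y 2 ^ 2 + y 3 ^ 2) *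
    ((y 0 - 1) ^ 2 + y 1 ^ 2 + y 2 ^ 2 + y 3 ^ 2))⁻¹)

lemma measurable_kin : Measurable (Function.uncurry kin) := by
  unfold kin
  apply Measurable.lintegral_prod_right'
    (f := fun p : (ℝ × ℝ) × E4 => ENNReal.ofReal
  ((((p.2 0 - p.1.1) ^ 2 + (p.2 1 - p.1.2) ^ 2 + p.2 2 ^ 2 + p.2 3 ^ 2) * (p.2 0 ^ 2 + p.2 1 ^ 2 + p.2 2 ^ 2 + p.2 3 ^ 2) *
    ((p.2 0 - 1) ^ 2 + p.2 1 ^ 2 + p.2 2 ^ 2 + p.2 3 ^ 2))⁻¹))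
  fun_prop

lemma kin_coords (a β : ℝ) : kin a β = ∫⁻ c, ∫⁻ y₁, ∫⁻ y₂, ∫⁻ y₃, ENNReal.ofReal
    ((((c - a) ^ 2 + (y₁ - β) ^ 2 + y₂ ^ 2 + y₃ ^ 2) * (c ^ 2 + y₁ ^ 2 + y₂ ^ 2 + y₃ ^ 2) *
    ((c - 1) ^ 2 + y₁ ^ 2 + y₂ ^ 2 + y₃ ^ 2))⁻¹) := by
  unfold kin
  exact lintegral_coords (fun c y₁ y₂ y₃ => ENNReal.ofReal
    ((((c - a) ^ 2 + (y₁ - β) ^ 2 + y₂ ^ 2 + y₃ ^ 2) * (c ^ 2 + y₁ ^ 2 + y₂ ^ 2 + y₃ ^ 2) *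
    ((c - 1) ^ 2 + y₁ ^ 2 + y₂ ^ 2 + y₃ ^ 2))⁻¹)) (by fun_prop)

lemma kin_neg (a β : ℝ) : kin a (-β) = kin a β := by
  rw [kin_coords, kin_coords]
  congr 1; ext c
  rw [← lintegral_neg_eq_self]
  congr 1; ext y₁
  have h1 : (-y₁ - -β) ^ 2 = (y₁ - β) ^ 2 := by ring
  simp_rw [h1, neg_sq]

lemma kin_abs (a β : ℝ) : kin a |β| = kin a β := by
  rcases abs_choice β with h | h <;> rw [h]
  exact kin_neg a β

/-- A unit vector `e` can be rotated to the first basis vector and, simultaneously, `x` into the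
plane of the first two. The sign of the second coordinate of the image of `x` is not controlled;
`kin_abs` makes it irrelevant. -/
lemma exists_rotation (e x : E4) (he : ‖e‖ = 1) : ∃ L : E4 ≃ₗᵢ[ℝ] E4,
    L e 0 = 1 ∧ L e 1 = 0 ∧ L e 2 = 0 ∧ L e 3 = 0 ∧ L x 2 = 0 ∧ L x 3 = 0 := by
  have hd : Module.finrank ℝ E4 = Fintype.card (Fin 4) := by simp
  let f : Fin 4 → E4 := ![e, x, 0, 0]
  let b := InnerProductSpace.gramSchmidtOrthonormalBasis hd f
  have hg : InnerProductSpace.gramSchmidtNormed ℝ f 0 = e := by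
    have : InnerProductSpace.gramSchmidt ℝ f 0 = e := by
      rw [show (0 : Fin 4) = ⊥ from rfl, InnerProductSpace.gramSchmidt_bot]; rfl
    rw [InnerProductSpace.gramSchmidtNormed, this, he]; simp
  have hb0 : b 0 = e := by
    have hne : e ≠ 0 := by rintro rfl; simp at he
    rw [← hg]
    exact InnerProductSpace.gramSchmidtOrthonormalBasis_apply hd (by rw [hg]; exact hne)
  have hz : ∀ i j : Fin 4, i < j → b.repr (f i) j = 0 := by
    intro i j hij
    rw [b.repr_apply_apply]
    exact InnerProductSpace.gramSchmidtOrthonormalBasis_inv_triangular hd f hij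
  refine ⟨b.repr, ?_, hz 0 1 (by decide), hz 0 2 (by decide), hz 0 3 (by decide),
    hz 1 2 (by decide), hz 1 3 (by decide)⟩
  rw [← hb0]; simp

/-- The inner integral depends on `x` only through its axial coordinates. -/
lemma inner_eq_kin (e x : E4) (he : ‖e‖ = 1) :
    ∫⁻ y : E4, ENNReal.ofReal ((‖x - y‖ ^ 2 * ‖y‖ ^ 2 * ‖y - e‖ ^ 2)⁻¹) =
      kin (inner ℝ e x) (√(‖x‖ ^ 2 - inner ℝ e x ^ 2)) := by
  obtain ⟨L, h0, h1, h2, h3, hx2, hx3⟩ := exists_rotation e x he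
  have hi : inner ℝ e x = L x 0 := by
    rw [← L.inner_map_map, PiLp.inner_apply, Fin.sum_univ_four, h0, h1, h2, h3]
    simp
  have hx : ‖x‖ ^ 2 = L x 0 ^ 2 + L x 1 ^ 2 := by
    rw [← L.norm_map, EuclideanSpace.real_norm_sq_eq, Fin.sum_univ_four, hx2, hx3]; ring
  rw [hi, hx, add_sub_cancel_left, sqrt_sq_eq_abs, kin_abs, kin]
  refine Eq.trans ?_ (L.measurePreserving.lintegral_comp (by fun_prop))
  congr 1; ext y
  congr 2
  rw [← L.norm_map (x - y), ← L.norm_map y, ← L.norm_map (y - e)]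
  simp only [map_sub, EuclideanSpace.real_norm_sq_eq, Fin.sum_univ_four, PiLp.sub_apply,
    h0, h1, h2, h3, hx2, hx3]
  ring

/-- The outer integral in axial coordinates; `4 π b²` is the area of the sphere of radius `b` in the
hyperplane orthogonal to `e`. -/
lemma outer_eq (e : E4) (he : ‖e‖ = 1) :
    ∫⁻ x : E4, ENNReal.ofReal ((‖e - x‖ ^ 2 * ‖x‖ ^ 2)⁻¹) *
        kin (inner ℝ e x) (√(‖x‖ ^ 2 - inner ℝ e x ^ 2)) =
      ∫⁻ a, ∫⁻ b in Ioi (0:ℝ), ENNReal.ofReal (4 * π * b ^ 2 *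
        (((a - 1) ^ 2 + b ^ 2) * (a ^ 2 + b ^ 2))⁻¹) * kin a b := by
  obtain ⟨L, h0, h1, h2, h3, -, -⟩ := exists_rotation e 0 he
  have hi : ∀ x, inner ℝ e x = L x 0 := fun x => by
    rw [← L.inner_map_map, PiLp.inner_apply, Fin.sum_univ_four, h0, h1, h2, h3]
    simp
  let G : ℝ → ℝ → ℝ≥0∞ := fun a q =>
    ENNReal.ofReal ((((a - 1) ^ 2 + q) * (a ^ 2 + q))⁻¹) * kin a (√q)
  have hG : Measurable (Function.uncurry G) :=
    Measurable.mul (by fun_prop) (measurable_kin.comp (f := fun p : ℝ × ℝ => (p.1, √p.2))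
      (by fun_prop))
  have hx : ∀ x : E4, ENNReal.ofReal ((‖e - x‖ ^ 2 * ‖x‖ ^ 2)⁻¹) *
        kin (inner ℝ e x) (√(‖x‖ ^ 2 - inner ℝ e x ^ 2)) =
      G (L x 0) (L x 1 ^ 2 + L x 2 ^ 2 + L x 3 ^ 2) := by
    intro x
    rw [hi, ← L.norm_map (e - x), ← L.norm_map x]
    simp only [map_sub, EuclideanSpace.real_norm_sq_eq, Fin.sum_univ_four, PiLp.sub_apply,
      h0, h1, h2, h3, G]
    congr 2
    · congr 1; ring
    · congr 1; ring
  simp_rw [hx]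
  have hm : Measurable fun p : ℝ × ℝ × ℝ × ℝ => G p.1 (p.2.1 ^ 2 + p.2.2.1 ^ 2 + p.2.2.2 ^ 2) :=
    hG.comp (f := fun p : ℝ × ℝ × ℝ × ℝ => (p.1, p.2.1 ^ 2 + p.2.2.1 ^ 2 + p.2.2.2 ^ 2))
      (by fun_prop)
  rw [L.measurePreserving.lintegral_comp
    (f := fun z : E4 => G (z 0) (z 1 ^ 2 + z 2 ^ 2 + z 3 ^ 2))
    (hm.comp (f := fun z : E4 => (z 0, z 1, z 2, z 3)) (by fun_prop)),
    lintegral_coords (fun a b c d => G a (b ^ 2 + c ^ 2 + d ^ 2)) hm]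
  congr 1; ext a
  rw [lintegral_space_radial (G a) (hG.comp (f := fun q => (a, q)) (by fun_prop))]
  refine setLIntegral_congr_fun measurableSet_Ioi fun b hb => ?_
  have hb : 0 < b := hb
  simp only [G]
  rw [sqrt_sq hb.le, ← mul_assoc, ← ENNReal.ofReal_mul (by positivity)]

/-- The inner integral in axial coordinates `(c, r)` of `y`, after averaging over the rotations that
fix `e`. -/
lemma kin_eq (a : ℝ) {b : ℝ} (hb : 0 < b) :
    kin a b = ∫⁻ c, ∫⁻ r in Ioi (0:ℝ), ENNReal.ofReal (2 * π * r ^ 2 *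
      (((c - 1) ^ 2 + r ^ 2) * (c ^ 2 + r ^ 2))⁻¹ * (1 / (2 * b * r) *
        log (((a - c) ^ 2 + (b + r) ^ 2) / ((a - c) ^ 2 + (b - r) ^ 2)))) := by
  rw [kin_coords]
  refine lintegral_congr_ae ?_
  -- for `c = a` the averaged kernel is singular at `r = b`
  filter_upwards [compl_mem_ae_iff.2 (measure_singleton a)] with c hc
  have hc : a - c ≠ 0 := fun h => hc (by simp; linarith)
  let F : ℝ → ℝ → ℝ≥0∞ := fun y q => ENNReal.ofReal
    ((((c - a) ^ 2 + b ^ 2 - 2 * b * y + q) * (c ^ 2 + q) * ((c - 1) ^ 2 + q))⁻¹)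
  have h1 : ∀ y₁ y₂ y₃ : ℝ, ENNReal.ofReal
    ((((c - a) ^ 2 + (y₁ - b) ^ 2 + y₂ ^ 2 + y₃ ^ 2) * (c ^ 2 + y₁ ^ 2 + y₂ ^ 2 + y₃ ^ 2) *
    ((c - 1) ^ 2 + y₁ ^ 2 + y₂ ^ 2 + y₃ ^ 2))⁻¹) = F y₁ (y₁ ^ 2 + y₂ ^ 2 + y₃ ^ 2) := by
    intro y₁ y₂ y₃
    simp only [F]
    congr 2; ring
  simp_rw [h1]
  rw [lintegral_space_axial F (by simp only [F, Function.uncurry_def]; fun_prop),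
    ← lintegral_const_mul' _ _ ENNReal.ofReal_ne_top]
  refine setLIntegral_congr_fun measurableSet_Ioi fun r hr => ?_
  have hr : 0 < r := hr
  have hP : 2 * b * r < (a - c) ^ 2 + b ^ 2 + r ^ 2 := by
    have : 0 < (a - c) ^ 2 := by positivity
    nlinarith [sq_nonneg (b - r)]
  have key := lintegral_sin_div (P := (a - c) ^ 2 + b ^ 2 + r ^ 2) (Q := 2 * b * r)
    (by positivity) hP
  have e1 : (a - c) ^ 2 + b ^ 2 + r ^ 2 + 2 * b * r = (a - c) ^ 2 + (b + r) ^ 2 := by ring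
  have e2 : (a - c) ^ 2 + b ^ 2 + r ^ 2 - 2 * b * r = (a - c) ^ 2 + (b - r) ^ 2 := by ring
  rw [e1, e2] at key
  have hC : 0 ≤ 2 * π * r ^ 2 * (((c - 1) ^ 2 + r ^ 2) * (c ^ 2 + r ^ 2))⁻¹ := by positivity
  rw [ENNReal.ofReal_mul hC, ← key, ← lintegral_const_mul' _ _ ENNReal.ofReal_ne_top,
    ← lintegral_const_mul' _ _ ENNReal.ofReal_ne_top]
  refine setLIntegral_congr_fun measurableSet_Ioo fun α hα => ?_
  have hs := sin_pos_of_pos_of_lt_pi hα.1 hα.2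
  simp only [F]
  rw [← ENNReal.ofReal_mul (by positivity), ← ENNReal.ofReal_mul (by positivity),
    ← ENNReal.ofReal_mul hC]
  congr 1
  have e3 : (c - a) ^ 2 + b ^ 2 - 2 * b * (r * cos α) + r ^ 2 =
    (a - c) ^ 2 + b ^ 2 + r ^ 2 - 2 * b * r * cos α := by ring
  rw [e3]
  simp only [mul_inv, div_eq_mul_inv]
  ring

/-- `|z - w|²` in logarithmic polar coordinates, where `ψ` is the difference of the arguments. -/
lemma exp_dist (u v ψ : ℝ) :
    exp u ^ 2 + exp v ^ 2 - 2 * (exp u * exp v * cos ψ) =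
      2 * (exp u * exp v) * (cosh (u - v) - cos ψ) := by
  have e1 : exp (u - v) * exp v = exp u := by rw [← exp_add]; ring_nf
  have e2 : exp (-(u - v)) * exp u = exp v := by rw [← exp_add]; ring_nf
  rw [cosh_eq]
  linear_combination - exp u * e1 - exp v * e2

lemma exp_pk (u θ : ℝ) : exp u ^ 2 * ((exp u * sin θ) ^ 2 *
    (((exp u * cos θ - 1) ^ 2 + (exp u * sin θ) ^ 2) *
      ((exp u * cos θ) ^ 2 + (exp u * sin θ) ^ 2))⁻¹) = exp u * sin θ * pk u θ := by
  have e1 : (exp u * cos θ - 1) ^ 2 + (exp u * sin θ) ^ 2 = 2 * exp u * (cosh u - cos θ) := by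
    have := exp_dist u 0 θ
    simp at this
    linear_combination this + exp u ^ 2 * sin_sq_add_cos_sq θ
  have e2 : (exp u * cos θ) ^ 2 + (exp u * sin θ) ^ 2 = exp u ^ 2 := by
    linear_combination exp u ^ 2 * sin_sq_add_cos_sq θ
  rw [e1, e2, pk]
  have he := exp_pos u
  by_cases h : cosh u - cos θ = 0
  · simp [h]
  · field_simp

lemma exp_lam (u v θ φ : ℝ) :
    log (((exp u * cos θ - exp v * cos φ) ^ 2 + (exp u * sin θ + exp v * sin φ) ^ 2) /
      ((exp u * cos θ - exp v * cos φ) ^ 2 + (exp u * sin θ - exp v * sin φ) ^ 2)) =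
    lam (u - v) θ φ := by
  have e1 : (exp u * cos θ - exp v * cos φ) ^ 2 + (exp u * sin θ + exp v * sin φ) ^ 2 =
      2 * (exp u * exp v) * (cosh (u - v) - cos (θ + φ)) := by
    rw [← exp_dist, cos_add]
    linear_combination exp u ^ 2 * sin_sq_add_cos_sq θ + exp v ^ 2 * sin_sq_add_cos_sq φ
  have e2 : (exp u * cos θ - exp v * cos φ) ^ 2 + (exp u * sin θ - exp v * sin φ) ^ 2 =
      2 * (exp u * exp v) * (cosh (u - v) - cos (θ - φ)) := by
    rw [← exp_dist, cos_sub]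
    linear_combination exp u ^ 2 * sin_sq_add_cos_sq θ + exp v ^ 2 * sin_sq_add_cos_sq φ
  rw [e1, e2, lam, mul_div_mul_left _ _ (by positivity)]

/-- The full integrand in logarithmic polar coordinates: all powers of `exp u` and `exp v` cancel. -/
lemma integrand_eq (u : ℝ) {θ : ℝ} (hθ : θ ∈ Ioo 0 π) :
    ENNReal.ofReal (exp u ^ 2) * (ENNReal.ofReal (4 * π * (exp u * sin θ) ^ 2 *
        (((exp u * cos θ - 1) ^ 2 + (exp u * sin θ) ^ 2) *
          ((exp u * cos θ) ^ 2 + (exp u * sin θ) ^ 2))⁻¹) * kin (exp u * cos θ) (exp u * sin θ)) =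
    ∫⁻ v, ∫⁻ φ in Ioo 0 π, ENNReal.ofReal (4 * π ^ 2) *
      ENNReal.ofReal (pk u θ * (pk v φ * lam (u - v) θ φ)) := by
  have hs := sin_pos_of_pos_of_lt_pi hθ.1 hθ.2
  rw [kin_eq _ (mul_pos (exp_pos u) hs), ← mul_assoc, ← ENNReal.ofReal_mul (by positivity)]
  have h1 : exp u ^ 2 * (4 * π * (exp u * sin θ) ^ 2 *
        (((exp u * cos θ - 1) ^ 2 + (exp u * sin θ) ^ 2) *
          ((exp u * cos θ) ^ 2 + (exp u * sin θ) ^ 2))⁻¹) = 4 * π * (exp u * sin θ * pk u θ) := by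
    rw [← exp_pk]; ring
  have hpk := pk_nonneg (u := u) hθ
  rw [h1, lintegral_upper_exp _ (by simp only [Function.uncurry_def]; fun_prop),
    ← lintegral_const_mul' _ _ ENNReal.ofReal_ne_top]
  congr 1; ext v
  rw [← lintegral_const_mul' _ _ ENNReal.ofReal_ne_top]
  refine setLIntegral_congr_fun measurableSet_Ioo fun φ hφ => ?_
  have hs' := sin_pos_of_pos_of_lt_pi hφ.1 hφ.2
  rw [← ENNReal.ofReal_mul (by positivity), ← ENNReal.ofReal_mul (by positivity),
    ← ENNReal.ofReal_mul (by positivity), exp_lam]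
  congr 1
  have h2 := exp_pk v φ
  set S := (((exp v * cos φ - 1) ^ 2 + (exp v * sin φ) ^ 2) *
      ((exp v * cos φ) ^ 2 + (exp v * sin φ) ^ 2))⁻¹
  have hu := exp_pos u
  have hv := exp_pos v
  calc _ = 4 * π * (exp u * sin θ * pk u θ) * (2 * π) * (exp v ^ 2 * ((exp v * sin φ) ^ 2 * S)) *
        (1 / (2 * (exp u * sin θ) * (exp v * sin φ)) * lam (u - v) θ φ) := by ring
    _ = _ := by
      rw [h2]
      field_simp

lemma measurable_integrand (u : ℝ) : Measurable fun p : (ℝ × ℝ) × ℝ =>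
    ENNReal.ofReal (4 * π ^ 2) *
      ENNReal.ofReal (pk u p.1.1 * (pk p.1.2 p.2 * lam (u - p.1.2) p.1.1 p.2)) := by
  unfold pk lam
  fun_prop

lemma ae_ne (a : ℝ) : ∀ᵐ x : ℝ, x ≠ a := compl_mem_ae_iff.2 (measure_singleton a)

lemma summable_zeta : Summable fun k : ℕ => (1 : ℝ) / (k + 1) ^ 3 := by
  have := (summable_nat_add_iff 1).2 (summable_one_div_nat_pow.2 (by norm_num : 1 < 3))
  simpa using this

lemma lintegral_K5 (e : E4) (he : ‖e‖ = 1) :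
    ∫⁻ x : E4, ∫⁻ y : E4, ENNReal.ofReal
      ((‖e - x‖ ^ 2 * ‖x‖ ^ 2 * ‖x - y‖ ^ 2 * ‖y‖ ^ 2 * ‖y - e‖ ^ 2)⁻¹) =
    ENNReal.ofReal (6 * π ^ 4 * ∑' k : ℕ, (1 : ℝ) / (k + 1) ^ 3) := by
  calc _ = ∫⁻ x : E4, ENNReal.ofReal ((‖e - x‖ ^ 2 * ‖x‖ ^ 2)⁻¹) *
        kin (inner ℝ e x) (√(‖x‖ ^ 2 - inner ℝ e x ^ 2)) := by
        congr 1; ext x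
        rw [← inner_eq_kin e x he, ← lintegral_const_mul' _ _ ENNReal.ofReal_ne_top]
        congr 1; ext y
        rw [← ENNReal.ofReal_mul (by positivity), ← mul_inv]
        congr 2; ring
    _ = ∫⁻ u, ∫⁻ θ in Ioo 0 π, ∫⁻ v, ∫⁻ φ in Ioo 0 π, ENNReal.ofReal (4 * π ^ 2) *
          ENNReal.ofReal (pk u θ * (pk v φ * lam (u - v) θ φ)) := by
        rw [outer_eq e he, lintegral_upper_exp]
        · congr 1; ext u
          exact setLIntegral_congr_fun measurableSet_Ioo fun θ hθ => integrand_eq u hθ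
        · exact Measurable.mul (by fun_prop) measurable_kin
    _ = ∫⁻ u, ∫⁻ v, ∫⁻ θ in Ioo 0 π, ∫⁻ φ in Ioo 0 π, ENNReal.ofReal (4 * π ^ 2) *
          ENNReal.ofReal (pk u θ * (pk v φ * lam (u - v) θ φ)) := by
        congr 1; ext u
        refine lintegral_lintegral_swap (Measurable.aemeasurable ?_)
        exact (measurable_integrand u).lintegral_prod_right'
    _ = ∫⁻ u, ∫⁻ v, ∑' n : ℕ, ENNReal.ofReal (4 * π ^ 4 / (n + 1 : ℕ)) *
          ENNReal.ofReal (exp (-(n + 1 : ℕ) * (|u| + |v| + |u - v|))) := by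
        refine lintegral_congr_ae ?_
        filter_upwards [ae_ne 0] with u hu
        refine lintegral_congr_ae ?_
        filter_upwards [ae_ne 0, ae_ne u] with v hv huv
        simp_rw [lintegral_const_mul' _ _ ENNReal.ofReal_ne_top]
        rw [lintegral_angles hu hv (sub_ne_zero.2 huv.symm), ← ENNReal.tsum_mul_left]
        congr 1; ext n
        rw [← ENNReal.ofReal_mul (by positivity), ← ENNReal.ofReal_mul (by positivity)]
        congr 1; ring
    _ = ∑' n : ℕ, ENNReal.ofReal (4 * π ^ 4 / (n + 1 : ℕ)) *
          ENNReal.ofReal (3 / (2 * ((n + 1 : ℕ) : ℝ) ^ 2)) := by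
        have : ∀ u : ℝ, ∫⁻ v, ∑' n : ℕ, ENNReal.ofReal (4 * π ^ 4 / (n + 1 : ℕ)) *
            ENNReal.ofReal (exp (-(n + 1 : ℕ) * (|u| + |v| + |u - v|))) =
            ∑' n : ℕ, ∫⁻ v, ENNReal.ofReal (4 * π ^ 4 / (n + 1 : ℕ)) *
            ENNReal.ofReal (exp (-(n + 1 : ℕ) * (|u| + |v| + |u - v|))) := fun u =>
          lintegral_tsum fun n => by fun_prop
        simp_rw [this, lintegral_const_mul' _ _ ENNReal.ofReal_ne_top]
        rw [lintegral_tsum]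
        · congr 1; ext n
          rw [lintegral_const_mul' _ _ ENNReal.ofReal_ne_top, radial (by positivity)]
        · intro n
          have hm : Measurable fun p : ℝ × ℝ =>
            ENNReal.ofReal (exp (-(n + 1 : ℕ) * (|p.1| + |p.2| + |p.1 - p.2|))) := by fun_prop
          exact (hm.lintegral_prod_right'.const_mul _).aemeasurable
    _ = _ := by
        rw [← tsum_mul_left, ENNReal.ofReal_tsum_of_nonneg (fun n => by positivity)
          (summable_zeta.mul_left _)]
        congr 1; ext n
        rw [← ENNReal.ofReal_mul (by positivity)]
        congr 1
        push_cast
        field_simp; norm_num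

/-- The period of the completed primitive graph `P₃` (the complete graph `K₅`) equals
`6 ζ(3)`: for any unit vector `e ∈ ℝ⁴`,
`∫_{ℝ⁴×ℝ⁴} (‖e−x‖²‖x‖²‖x−y‖²‖y‖²‖y−e‖²)⁻¹ dx dy = 6 π⁴ ζ(3)`. -/
theorem integral_K5 (e : EuclideanSpace ℝ (Fin 4)) (he : ‖e‖ = 1) :
    (∫ xy : EuclideanSpace ℝ (Fin 4) × EuclideanSpace ℝ (Fin 4),
        (‖e - xy.1‖ ^ 2 * ‖xy.1‖ ^ 2 * ‖xy.1 - xy.2‖ ^ 2 * ‖xy.2‖ ^ 2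
          * ‖xy.2 - e‖ ^ 2)⁻¹) =
      6 * Real.pi ^ 4 * ∑' k : ℕ, (1 : ℝ) / (k + 1) ^ 3 := by
  have hm : Measurable fun xy : E4 × E4 => (‖e - xy.1‖ ^ 2 * ‖xy.1‖ ^ 2 * ‖xy.1 - xy.2‖ ^ 2 *
    ‖xy.2‖ ^ 2 * ‖xy.2 - e‖ ^ 2)⁻¹ := by fun_prop
  rw [integral_eq_lintegral_of_nonneg_ae (Filter.Eventually.of_forall fun xy => by
    simp only [Pi.zero_apply]; positivity) hm.aestronglyMeasurable, Measure.volume_eq_prod,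
    lintegral_prod _ (by fun_prop), lintegral_K5 e he, ENNReal.toReal_ofReal]
  have : 0 ≤ ∑' k : ℕ, (1 : ℝ) / (k + 1) ^ 3 := tsum_nonneg fun k => by positivity
  positivity
end
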